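/- arXiv:2109.06968 — 16 statements merged into one kernel-verified Lean document; each statement's English description precedes it below -/
import Mathlib

section
/- Let α, n ∈ ℂ and N ∈ ℂ with N ≠ 0, and set a₁ = −α, a₂ = −n. Let t ↦ c(t) be a differentiable complex function on an open set with t ≠ 0 and c(t) ∉ {0, 1, −1}, satisfying 2·c(t)·t² = (c(t)−1)²·N identically. Let x, y be differentiable functions satisfying the semi-classical Laguerre differential system on the range of c, with x(c(t)) ≠ 0. Define q(t) = t·x(c(t))/(c(t)−1) and p(t) = −2·c(t)·t·y(c(t))/((c(t)−1)·x(c(t))). Then q and p satisfy the Hamiltonian form of the fourth Painlevé equation: q'(t) = q(2p − q − t) − a₁ and p'(t) = p(2q − p + t) + a₂. -/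
/-!
Put `u = t / (c - 1)`, so that the relation `2ct² = (c - 1)²N` becomes `N = 2cu²`, while
`q = u x` and `p = -2cu y / x`. Differentiating the relation gives `t (c + 1) c' = 2c(c - 1)`,
that is `c' = 2c / (u (c + 1))`, and hence `u' = -1 / (c + 1)`. In terms of `t` the Laguerre
system becomes

* `ẋ = -u x² - (t - 1 / (u (c + 1))) x - 4cu y + α / u`,
* `ẏ = -2cu y² / x + (α / (u x) + u x) y + n x / (2cu)`,

and the product rule turns these two equations into the Painlevé IV system for `q` and `p`.
-/

open Filter Topology

namespace LaguerrePainleve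

variable {𝕜 : Type*} [NontriviallyNormedField 𝕜]

/-- The functions `x`, `y` satisfy the semi-classical Laguerre system at the point `c`. The factor
`1 / (c + 1)` on the left-hand sides of the system is moved to the right; the equations are
meaningful for `c ∉ {0, -1}` and `x c ≠ 0`. -/
structure IsLaguerreSolutionAt (α n N : 𝕜) (x y : 𝕜 → 𝕜) (c : 𝕜) : Prop where
  hasDerivAt_fst : HasDerivAt x
    ((-N * x c ^ 2 / (4 * c ^ 2) - (N * (c - 1) / (4 * c ^ 2) - 1 / (2 * c * (c + 1))) * x c
      - N * y c / c + α / (2 * c)) * (c + 1)) c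
  hasDerivAt_snd : HasDerivAt y
    ((-N * y c ^ 2 / (2 * c * x c) + (α / (2 * c * x c) + N * x c / (4 * c ^ 2)) * y c
      + n * x c / (4 * c ^ 2)) * (c + 1)) c

/-- The functions `q`, `p` satisfy the Hamiltonian form of the fourth Painlevé equation with
parameters `a₁`, `a₂` at the point `t`. -/
structure IsPainleveIVSolutionAt (a₁ a₂ : 𝕜) (q p : 𝕜 → 𝕜) (t : 𝕜) : Prop where
  hasDerivAt_fst : HasDerivAt q (q t * (2 * p t - q t - t) - a₁) t
  hasDerivAt_snd : HasDerivAt p (p t * (2 * q t - p t + t) + a₂) t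

/-- The function `c` is a change of the independent variable from the Laguerre to the Painlevé
system near `t`: it is differentiable at `t` and satisfies `2cs² = (c - 1)²N` for `s` near `t`. -/
structure IsTimeChangeAt (N : 𝕜) (c : 𝕜 → 𝕜) (t : 𝕜) : Prop where
  differentiableAt : DifferentiableAt 𝕜 c t
  eventually_eq : ∀ᶠ s in 𝓝 t, 2 * c s * s ^ 2 = (c s - 1) ^ 2 * N

/-- The factor `u = t / (c - 1)` relating the Laguerre variables to the Painlevé variables
`q = u x` and `p = -2cu y / x`. -/
def scale (c : 𝕜 → 𝕜) (t : 𝕜) : 𝕜 := t / (c t - 1)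

namespace IsTimeChangeAt

variable {α n N t : 𝕜} {c x y : 𝕜 → 𝕜}

theorem eq (h : IsTimeChangeAt N c t) : 2 * c t * t ^ 2 = (c t - 1) ^ 2 * N :=
  h.eventually_eq.self_of_nhds

theorem ne_zero (h : IsTimeChangeAt N c t) (hN : N ≠ 0) : c t ≠ 0 := by
  intro hc
  have hrel := h.eq
  simp [hc, hN.symm] at hrel

theorem deriv_relation (h : IsTimeChangeAt N c t) :
    2 * deriv c t * t ^ 2 + 4 * c t * t = 2 * (c t - 1) * deriv c t * N := by
  have hc := h.differentiableAt.hasDerivAt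
  have hleft : HasDerivAt (fun s => 2 * c s * s ^ 2)
      (2 * deriv c t * t ^ 2 + 4 * c t * t) t :=
    ((hc.const_mul 2).fun_mul (hasDerivAt_pow 2 t)).congr_deriv (by push_cast; ring)
  have hright : HasDerivAt (fun s => (c s - 1) ^ 2 * N)
      (2 * (c t - 1) * deriv c t * N) t :=
    (((hc.sub_const 1).fun_pow 2).mul_const N).congr_deriv (by push_cast; ring)
  exact hleft.unique (hright.congr_of_eventuallyEq h.eventually_eq)

variable [NeZero (2 : 𝕜)]

theorem sub_one_ne_zero (h : IsTimeChangeAt N c t) (ht : t ≠ 0) : c t - 1 ≠ 0 := by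
  intro hc
  have hrel := h.eq
  simp [sub_eq_zero.1 hc, ht, two_ne_zero] at hrel

theorem mul_deriv (h : IsTimeChangeAt N c t) (ht : t ≠ 0) :
    t * (c t + 1) * deriv c t = 2 * c t * (c t - 1) := by
  refine mul_left_cancel₀ (mul_ne_zero two_ne_zero ht) ?_
  linear_combination 2 * deriv c t * h.eq - (c t - 1) * h.deriv_relation

theorem add_one_ne_zero (h : IsTimeChangeAt N c t) (hN : N ≠ 0) (ht : t ≠ 0) : c t + 1 ≠ 0 := by
  intro hc
  have hprod : 2 * c t * (c t - 1) = 0 := by rw [← h.mul_deriv ht, hc, mul_zero, zero_mul]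
  exact mul_ne_zero (mul_ne_zero two_ne_zero (h.ne_zero hN)) (h.sub_one_ne_zero ht) hprod

theorem scale_ne_zero (h : IsTimeChangeAt N c t) (ht : t ≠ 0) : scale c t ≠ 0 :=
  div_ne_zero ht (h.sub_one_ne_zero ht)

theorem scale_mul_sub_one (h : IsTimeChangeAt N c t) (ht : t ≠ 0) :
    scale c t * (c t - 1) = t :=
  div_mul_cancel₀ t (h.sub_one_ne_zero ht)

theorem eq_two_mul_mul_scale_sq (h : IsTimeChangeAt N c t) (ht : t ≠ 0) :
    N = 2 * c t * scale c t ^ 2 := by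
  refine mul_left_cancel₀ (pow_ne_zero 2 (h.sub_one_ne_zero ht)) ?_
  rw [← h.eq]
  linear_combination -2 * c t * (scale c t * (c t - 1) + t) * h.scale_mul_sub_one ht

theorem hasDerivAt (h : IsTimeChangeAt N c t) (hN : N ≠ 0) (ht : t ≠ 0) :
    HasDerivAt c (2 * c t / (scale c t * (c t + 1))) t := by
  refine h.differentiableAt.hasDerivAt.congr_deriv ?_
  rw [eq_div_iff (mul_ne_zero (h.scale_ne_zero ht) (h.add_one_ne_zero hN ht))]
  refine mul_left_cancel₀ (h.sub_one_ne_zero ht) ?_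
  linear_combination h.mul_deriv ht + deriv c t * (c t + 1) * h.scale_mul_sub_one ht

theorem hasDerivAt_scale (h : IsTimeChangeAt N c t) (hN : N ≠ 0) (ht : t ≠ 0) :
    HasDerivAt (scale c) (-1 / (c t + 1)) t := by
  have hc1 := h.sub_one_ne_zero ht
  have hc2 := h.add_one_ne_zero hN ht
  refine ((hasDerivAt_id t).fun_div ((h.hasDerivAt hN ht).sub_const 1) hc1).congr_deriv ?_
  simp only [scale, id]
  field_simp
  ring

theorem hasDerivAt_mul_scale (h : IsTimeChangeAt N c t) (hN : N ≠ 0) (ht : t ≠ 0) :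
    HasDerivAt (fun s => c s * scale c s) (c t / (c t + 1)) t := by
  have hu := h.scale_ne_zero ht
  refine ((h.hasDerivAt hN ht).fun_mul (h.hasDerivAt_scale hN ht)).congr_deriv ?_
  field_simp
  ring

theorem hasDerivAt_laguerre_fst (h : IsTimeChangeAt N c t) (hN : N ≠ 0) (ht : t ≠ 0)
    (hxy : IsLaguerreSolutionAt α n N x y (c t)) :
    HasDerivAt (fun s => x (c s))
      (-scale c t * x (c t) ^ 2 - (t - 1 / (scale c t * (c t + 1))) * x (c t)
        - 4 * c t * scale c t * y (c t) + α / scale c t) t := by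
  have hu := h.scale_ne_zero ht
  have hc := h.ne_zero hN
  have hc2 := h.add_one_ne_zero hN ht
  have four_eq : (4 : 𝕜) = 2 ^ 2 := by norm_num
  refine (hxy.hasDerivAt_fst.comp t (h.hasDerivAt hN ht)).congr_deriv ?_
  rw [h.eq_two_mul_mul_scale_sq ht, four_eq]
  field_simp
  linear_combination -x (c t) * scale c t * (c t + 1) * h.scale_mul_sub_one ht

theorem hasDerivAt_laguerre_snd (h : IsTimeChangeAt N c t) (hN : N ≠ 0) (ht : t ≠ 0)
    (hxy : IsLaguerreSolutionAt α n N x y (c t)) :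
    HasDerivAt (fun s => y (c s))
      (-2 * c t * scale c t * y (c t) ^ 2 / x (c t)
        + (α / (scale c t * x (c t)) + scale c t * x (c t)) * y (c t)
        + n * x (c t) / (2 * c t * scale c t)) t := by
  have hc := h.ne_zero hN
  have hc2 := h.add_one_ne_zero hN ht
  have four_eq : (4 : 𝕜) = 2 ^ 2 := by norm_num
  refine (hxy.hasDerivAt_snd.comp t (h.hasDerivAt hN ht)).congr_deriv ?_
  rw [h.eq_two_mul_mul_scale_sq ht, four_eq]
  field_simp

theorem isPainleveIVSolutionAt_scale (h : IsTimeChangeAt N c t) (hN : N ≠ 0) (ht : t ≠ 0)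
    (hx : x (c t) ≠ 0) (hxy : IsLaguerreSolutionAt α n N x y (c t)) :
    IsPainleveIVSolutionAt (-α) (-n) (fun s => scale c s * x (c s))
      (fun s => -2 * (c s * scale c s) * y (c s) / x (c s)) t := by
  have hu := h.scale_ne_zero ht
  have hc := h.ne_zero hN
  have hX := h.hasDerivAt_laguerre_fst hN ht hxy
  have hY := h.hasDerivAt_laguerre_snd hN ht hxy
  constructor
  · refine ((h.hasDerivAt_scale hN ht).fun_mul hX).congr_deriv ?_
    field_simp
    ring
  · have hcu := (h.hasDerivAt_mul_scale hN ht).const_mul (-2)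
    refine ((hcu.fun_mul hY).fun_div hX hx).congr_deriv ?_
    field_simp
    ring

end IsTimeChangeAt

end LaguerrePainleve

open LaguerrePainleve

theorem stmt_0_general {𝕜 : Type*} [NontriviallyNormedField 𝕜] [NeZero (2 : 𝕜)]
    {α n N t : 𝕜} {c x y : 𝕜 → 𝕜} (hN : N ≠ 0) (ht : t ≠ 0) (hc : IsTimeChangeAt N c t)
    (hx : x (c t) ≠ 0) (hxy : IsLaguerreSolutionAt α n N x y (c t)) :
    IsPainleveIVSolutionAt (-α) (-n) (fun s => s * x (c s) / (c s - 1))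
      (fun s => -(2 * c s * s * y (c s)) / ((c s - 1) * x (c s))) t := by
  convert hc.isPainleveIVSolutionAt_scale hN ht hx hxy using 2 with s s
  · exact (div_mul_eq_mul_div _ _ _).symm
  · rw [scale, div_mul_eq_div_div]
    ring

/-- The semi-classical Laguerre differential system, transformed via
`q(t) = t·x(c(t))/(c(t)−1)`, `p(t) = −2·c(t)·t·y(c(t))/((c(t)−1)·x(c(t)))`
(with `2·c(t)·t² = (c(t)−1)²·N`), yields the Hamiltonian form of the fourth
Painlevé equation with `a₁ = −α`, `a₂ = −n`. -/
theorem stmt_0 (α n N : ℂ) (hN : N ≠ 0)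
    (U : Set ℂ) (hU : IsOpen U)
    (c x y q p dx dy : ℂ → ℂ)
    (hcdiff : ∀ t ∈ U, DifferentiableAt ℂ c t)
    (ht0 : ∀ t ∈ U, t ≠ 0)
    (hc0 : ∀ t ∈ U, c t ≠ 0)
    (hc1 : ∀ t ∈ U, c t ≠ 1)
    (hcm1 : ∀ t ∈ U, c t ≠ -1)
    (hrel : ∀ t ∈ U, 2 * c t * t ^ 2 = (c t - 1) ^ 2 * N)
    (hx : ∀ t ∈ U, HasDerivAt x (dx (c t)) (c t))
    (hy : ∀ t ∈ U, HasDerivAt y (dy (c t)) (c t))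
    (hxne : ∀ t ∈ U, x (c t) ≠ 0)
    (hsys1 : ∀ t ∈ U, dx (c t) / (c t + 1) =
      -N * (x (c t)) ^ 2 / (4 * (c t) ^ 2)
        - (N * (c t - 1) / (4 * (c t) ^ 2) - 1 / (2 * c t * (c t + 1))) * x (c t)
        - N * y (c t) / c t + α / (2 * c t))
    (hsys2 : ∀ t ∈ U, dy (c t) / (c t + 1) =
      -N * (y (c t)) ^ 2 / (2 * c t * x (c t))
        + (α / (2 * c t * x (c t)) + N * x (c t) / (4 * (c t) ^ 2)) * y (c t)
        + n * x (c t) / (4 * (c t) ^ 2))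
    (hq : ∀ t, q t = t * x (c t) / (c t - 1))
    (hp : ∀ t, p t = -(2 * c t * t * y (c t)) / ((c t - 1) * x (c t))) :
    ∀ t ∈ U,
      HasDerivAt q (q t * (2 * p t - q t - t) - (-α)) t ∧
      HasDerivAt p (p t * (2 * q t - p t + t) + (-n)) t := by
  intro t ht
  obtain rfl : q = _ := funext hq
  obtain rfl : p = _ := funext hp
  have hc : IsTimeChangeAt N c t := ⟨hcdiff t ht, eventually_of_mem (hU.mem_nhds ht) hrel⟩
  have hc2 : c t + 1 ≠ 0 := hc.add_one_ne_zero hN (ht0 t ht)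
  have hxy : IsLaguerreSolutionAt α n N x y (c t) :=
    ⟨(hx t ht).congr_deriv ((div_eq_iff hc2).1 (hsys1 t ht)),
      (hy t ht).congr_deriv ((div_eq_iff hc2).1 (hsys2 t ht))⟩
  have hpq := stmt_0_general hN (ht0 t ht) hc (hxne t ht) hxy
  exact ⟨hpq.hasDerivAt_fst, hpq.hasDerivAt_snd⟩
end

section
/- Let α, n ∈ ℂ and N ∈ ℂ with N ≠ 0. Define K(x, y, c) = (N/(4c²))·( ((c²−1)N − 2c)·y + (c+1)(N·y + n)·x + 2c(c+1)·y·(N·y − α)/x ). If x, y are differentiable functions satisfying the semi-classical Laguerre differential system at a point c with c ∉ {0, −1} and x(c) ≠ 0, then the system is Hamiltonian with respect to the symplectic form N·dx∧dy/x with Hamiltonian K; that is, (N/x(c))·y'(c) = ∂K/∂x evaluated at (x(c), y(c), c), and (N/x(c))·x'(c) = −∂K/∂y evaluated at (x(c), y(c), c). -/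
/-- The Hamiltonian of the semi-classical Laguerre differential system. -/
noncomputable def Klag (α n N x y c : ℂ) : ℂ :=
  N / (4 * c ^ 2) * (((c ^ 2 - 1) * N - 2 * c) * y + (c + 1) * (N * y + n) * x
    + 2 * c * (c + 1) * y * (N * y - α) / x)

section PartialDerivatives

variable (α n N : ℂ) {x c : ℂ} (y : ℂ)

theorem hasDerivAt_Klag_x (hx : x ≠ 0) :
    HasDerivAt (fun u => Klag α n N u y c)
      (N / (4 * c ^ 2) * ((c + 1) * (N * y + n)
        - 2 * c * (c + 1) * y * (N * y - α) / x ^ 2)) x := by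
  have affine_part : HasDerivAt
      (fun u => ((c ^ 2 - 1) * N - 2 * c) * y + (c + 1) * (N * y + n) * u)
      ((c + 1) * (N * y + n)) x :=
    (hasDerivAt_const_mul _).const_add _
  have polar_part : HasDerivAt (fun u => 2 * c * (c + 1) * y * (N * y - α) / u)
      (-(2 * c * (c + 1) * y * (N * y - α) / x ^ 2)) x := by
    simpa only [div_eq_mul_inv, mul_neg] using (hasDerivAt_inv hx).const_mul _
  exact ((affine_part.add polar_part).const_mul _).congr_deriv (by rw [← sub_eq_add_neg])

theorem hasDerivAt_Klag_y :
    HasDerivAt (fun v => Klag α n N x v c)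
      (N / (4 * c ^ 2) * ((c ^ 2 - 1) * N - 2 * c + (c + 1) * N * x
        + 2 * c * (c + 1) * (2 * N * y - α) / x)) y := by
  have affine_part : HasDerivAt
      (fun v => ((c ^ 2 - 1) * N - 2 * c) * v + (c + 1) * (N * v + n) * x)
      ((c ^ 2 - 1) * N - 2 * c + (c + 1) * N * x) y :=
    (hasDerivAt_const_mul _).add ((((hasDerivAt_const_mul N).add_const n).const_mul _).mul_const x)
  have quadratic_part : HasDerivAt (fun v => 2 * c * (c + 1) * v * (N * v - α) / x)
      (2 * c * (c + 1) * (2 * N * y - α) / x) y :=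
    (((hasDerivAt_const_mul _).mul ((hasDerivAt_const_mul N).sub_const α)).div_const x).congr_deriv
      (by ring)
  exact (affine_part.add quadratic_part).const_mul _

theorem deriv_Klag_x_eq_div_mul (hc : c ≠ 0) (hx : x ≠ 0) :
    deriv (fun u => Klag α n N u y c) x =
      N / x * ((-N * y ^ 2 / (2 * c * x) + (α / (2 * c * x) + N * x / (4 * c ^ 2)) * y
        + n * x / (4 * c ^ 2)) * (c + 1)) := by
  rw [(hasDerivAt_Klag_x α n N y hx).deriv]
  field_simp
  ring

theorem neg_deriv_Klag_y_eq_div_mul (hc : c ≠ 0) (hc1 : c + 1 ≠ 0) (hx : x ≠ 0) :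
    -deriv (fun v => Klag α n N x v c) y =
      N / x * ((-N * x ^ 2 / (4 * c ^ 2)
        - (N * (c - 1) / (4 * c ^ 2) - 1 / (2 * c * (c + 1))) * x
        - N * y / c + α / (2 * c)) * (c + 1)) := by
  rw [(hasDerivAt_Klag_y α n N y).deriv]
  field_simp
  ring

end PartialDerivatives

/-- The semi-classical Laguerre differential system is Hamiltonian with respect to
the symplectic form `N·dx∧dy/x` with Hamiltonian `Klag`. -/
theorem stmt_1 (α n N : ℂ) (hN : N ≠ 0) (c : ℂ)
    (hc0 : c ≠ 0) (hcm1 : c ≠ -1)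
    (x y : ℂ → ℂ) (dx dy : ℂ)
    (hx : HasDerivAt x dx c) (hy : HasDerivAt y dy c)
    (hxne : x c ≠ 0)
    (hsys1 : dx / (c + 1) = -N * (x c) ^ 2 / (4 * c ^ 2)
        - (N * (c - 1) / (4 * c ^ 2) - 1 / (2 * c * (c + 1))) * x c
        - N * y c / c + α / (2 * c))
    (hsys2 : dy / (c + 1) = -N * (y c) ^ 2 / (2 * c * x c)
        + (α / (2 * c * x c) + N * x c / (4 * c ^ 2)) * y c
        + n * x c / (4 * c ^ 2)) :
    N / x c * dy = deriv (fun u => Klag α n N u (y c) c) (x c) ∧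
    N / x c * dx = -deriv (fun v => Klag α n N (x c) v c) (y c) := by
  have hc1 : c + 1 ≠ 0 := mt eq_neg_of_add_eq_zero_left hcm1
  rw [div_eq_iff hc1] at hsys1 hsys2
  constructor
  · rw [hsys2, deriv_Klag_x_eq_div_mul α n N (y c) hc0 hxne]
  · rw [hsys1, neg_deriv_Klag_y_eq_div_mul α n N (y c) hc0 hc1 hxne]
end

section
/- Let α, N ∈ ℂ with N ≠ 0, and let c, t ∈ ℂ with c ∉ {0, 1}, t ≠ 0 and 2ct² = (c−1)²N. Let (qₙ) and (pₙ) be sequences of nonzero complex numbers satisfying, for all n, the standard discrete Painlevé system of type d-P(A₂⁽¹⁾/E₆⁽¹⁾): q_{n+1} + qₙ = pₙ − t − (2+n+α)/pₙ and pₙ + p_{n−1} = qₙ + t − (1+n)/qₙ. Assume qₙ² + (t−pₙ)qₙ − n − 1 ≠ 0 for all n, and define sequences xₙ, yₙ by xₙ/(c−1) = qₙ(qₙ² + (t−pₙ)qₙ + α)/(t(qₙ² + (t−pₙ)qₙ − n − 1)) and −2c·yₙ/((c−1)·xₙ) = (qₙ³pₙ + (2+2n+α+t·pₙ−pₙ²)qₙ²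 + (n+1)(t−2pₙ)qₙ − (n+1)²)/(t·qₙ(qₙ² + (t−pₙ)qₙ − n − 1)), assuming xₙ ≠ 0 and n + N·yₙ ≠ 0. Then for all n: xₙ·x_{n−1} = 2Nc·yₙ(yₙ − α/N)/(n + N·yₙ) and 2(y_{n+1} + yₙ) = 2α/N − (xₙ² + (c−1)xₙ)/c. -/
/-!
With `sₙ := pₙ - t - qₙ`, the two recurrences of the Painlevé system read
`pₙ sₙ = q_{n+1} pₙ + (n + 2 + α)` and `qₙ sₙ = -qₙ p_{n-1} - (n + 1)`, so that
`qₙ sₙ + p_{n-1} s_{n-1} = α`. Eliminating `pₙ` and `qₙ` in favour of step `n - 1` turns the change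
of variables into the shift `xₙ = κ s_{n-1}`, `N yₙ = q_{n-1} s_{n-1}`, where `κ = (c - 1) / t`
satisfies `N κ² = 2 c`. Both Laguerre recurrences are then immediate: the first is
`(s_{n-1} q_{n-1}) (s_{n-2} p_{n-2})` grouped in two ways, and the second expresses
`qₙ sₙ + q_{n-1} s_{n-1} = α - s_{n-1} (p_{n-1} - q_{n-1}) = α - s_{n-1} (s_{n-1} + t)`.
-/

section

variable {K : Type*} [Field K] {α N c t κ : K} {q p x y : ℤ → K}

/-- The standard discrete Painlevé system of type d-P(A₂⁽¹⁾/E₆⁽¹⁾) with parameters `α` and `t`, for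
sequences without zeros, so that no division in it takes a junk value. -/
structure IsDiscretePainleveA2E6 (α t : K) (q p : ℤ → K) : Prop where
  q_ne_zero (n : ℤ) : q n ≠ 0
  p_ne_zero (n : ℤ) : p n ≠ 0
  q_succ_add (n : ℤ) : q (n + 1) + q n = p n - t - (2 + (n : K) + α) / p n
  p_add_pred (n : ℤ) : p n + p (n - 1) = q n + t - (1 + (n : K)) / q n

/-- The third variable `pₙ - t - qₙ` of the symmetric form of the Painlevé system: up to sign, it
completes `pₙ` and `-qₙ` to a triple with sum `t`. -/
def thirdVar (t : K) (q p : ℤ → K) (n : ℤ) : K := p n - t - q n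

namespace IsDiscretePainleveA2E6

theorem p_mul_thirdVar (h : IsDiscretePainleveA2E6 α t q p) (n : ℤ) :
    p n * thirdVar t q p n = q (n + 1) * p n + (n + 2 + α) := by
  have hp := h.p_ne_zero n
  have hq_succ := h.q_succ_add n
  field_simp at hq_succ
  unfold thirdVar
  linear_combination -hq_succ

theorem q_mul_thirdVar (h : IsDiscretePainleveA2E6 α t q p) (n : ℤ) :
    q n * thirdVar t q p n = -(q n * p (n - 1)) - (n + 1) := by
  have hq := h.q_ne_zero n
  have hp_pred := h.p_add_pred n
  field_simp at hp_pred
  unfold thirdVar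
  linear_combination hp_pred

theorem q_mul_thirdVar_add_p_mul_thirdVar_pred (h : IsDiscretePainleveA2E6 α t q p) (n : ℤ) :
    q n * thirdVar t q p n + p (n - 1) * thirdVar t q p (n - 1) = α := by
  have hp_third := h.p_mul_thirdVar (n - 1)
  rw [sub_add_cancel] at hp_third
  push_cast at hp_third
  linear_combination h.q_mul_thirdVar n + hp_third

theorem denom_eq (h : IsDiscretePainleveA2E6 α t q p) (n : ℤ) :
    q n ^ 2 + (t - p n) * q n - n - 1 = q n * p (n - 1) := by
  have hq_third := h.q_mul_thirdVar n
  unfold thirdVar at hq_third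
  linear_combination -hq_third

theorem x_numer_eq (h : IsDiscretePainleveA2E6 α t q p) (n : ℤ) :
    q n ^ 2 + (t - p n) * q n + α = p (n - 1) * thirdVar t q p (n - 1) := by
  have hsum := h.q_mul_thirdVar_add_p_mul_thirdVar_pred n
  rw [thirdVar.eq_def t q p n] at hsum
  linear_combination -hsum

theorem y_numer_eq (h : IsDiscretePainleveA2E6 α t q p) (n : ℤ) :
    q n ^ 3 * p n + (2 + 2 * (n : K) + α + t * p n - p n ^ 2) * q n ^ 2
        + ((n : K) + 1) * (t - 2 * p n) * q n - ((n : K) + 1) ^ 2 =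
      -(q n ^ 2 * (q (n - 1) * p (n - 1))) := by
  have hdenom := h.denom_eq n
  have hnumer := h.x_numer_eq n
  unfold thirdVar at hnumer
  linear_combination (q n * p n + n + 1 - q n * p (n - 1) - q n ^ 2) * hdenom + q n ^ 2 * hnumer

theorem x_ratio_eq (h : IsDiscretePainleveA2E6 α t q p) (n : ℤ) :
    q n * (q n ^ 2 + (t - p n) * q n + α) / (t * (q n ^ 2 + (t - p n) * q n - n - 1)) =
      thirdVar t q p (n - 1) / t := by
  have hq := h.q_ne_zero n
  have hp := h.p_ne_zero (n - 1)
  rw [h.denom_eq, h.x_numer_eq]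
  field_simp

theorem y_ratio_eq (h : IsDiscretePainleveA2E6 α t q p) (n : ℤ) :
    (q n ^ 3 * p n + (2 + 2 * (n : K) + α + t * p n - p n ^ 2) * q n ^ 2
        + ((n : K) + 1) * (t - 2 * p n) * q n - ((n : K) + 1) ^ 2) /
        (t * q n * (q n ^ 2 + (t - p n) * q n - n - 1)) =
      -q (n - 1) / t := by
  have hq := h.q_ne_zero n
  have hp := h.p_ne_zero (n - 1)
  rw [h.denom_eq, h.y_numer_eq]
  field_simp

theorem laguerre_mul (h : IsDiscretePainleveA2E6 α t q p) (hN : N ≠ 0) (hκ : N * κ ^ 2 = 2 * c)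
    (hx : ∀ n, x n = κ * thirdVar t q p (n - 1))
    (hy : ∀ n, N * y n = q (n - 1) * thirdVar t q p (n - 1)) (n : ℤ) :
    x n * x (n - 1) = 2 * N * c * y n * (y n - α / N) / (n + N * y n) := by
  have hden : n + N * y n = -(q (n - 1) * p (n - 1 - 1)) := by
    have hq_third := h.q_mul_thirdVar (n - 1)
    push_cast at hq_third
    linear_combination hy n + hq_third
  have hden_ne : n + N * y n ≠ 0 := by
    rw [hden]
    exact neg_ne_zero.mpr (mul_ne_zero (h.q_ne_zero _) (h.p_ne_zero _))
  have hnum : N * (y n - α / N) = -(p (n - 1 - 1) * thirdVar t q p (n - 1 - 1)) := by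
    rw [mul_sub, mul_div_cancel₀ α hN]
    linear_combination hy n + h.q_mul_thirdVar_add_p_mul_thirdVar_pred (n - 1)
  rw [eq_div_iff hden_ne]
  calc x n * x (n - 1) * (n + N * y n)
      = κ ^ 2 * (q (n - 1) * thirdVar t q p (n - 1)) *
          -(p (n - 1 - 1) * thirdVar t q p (n - 1 - 1)) := by
        rw [hden, hx n, hx (n - 1)]
        ring
    _ = N * κ ^ 2 * y n * (N * (y n - α / N)) := by
        rw [← hy n, ← hnum]
        ring
    _ = 2 * N * c * y n * (y n - α / N) := by
        rw [hκ]
        ring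

theorem laguerre_add (h : IsDiscretePainleveA2E6 α t q p) (hN : N ≠ 0) (hc : c ≠ 0)
    (hκ : N * κ ^ 2 = 2 * c) (hx : ∀ n, x n = κ * thirdVar t q p (n - 1))
    (hy : ∀ n, N * y n = q (n - 1) * thirdVar t q p (n - 1)) (n : ℤ) :
    2 * (y (n + 1) + y n) = 2 * α / N - (x n ^ 2 + κ * t * x n) / c := by
  set s := thirdVar t q p (n - 1) with hs
  have hp_sub_q : p (n - 1) - q (n - 1) = s + t := by
    rw [hs, thirdVar]
    ring
  have hy_add : N * (y (n + 1) + y n) = α - s * (s + t) := by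
    have hy_succ := hy (n + 1)
    rw [add_sub_cancel_right] at hy_succ
    linear_combination hy_succ + hy n + h.q_mul_thirdVar_add_p_mul_thirdVar_pred n - s * hp_sub_q
  have hx_sq : N * (x n ^ 2 + κ * t * x n) = 2 * c * (s * (s + t)) := by
    rw [hx n]
    linear_combination s * (s + t) * hκ
  field_simp
  linear_combination 2 * c * hy_add + hx_sq

end IsDiscretePainleveA2E6

theorem stmt_2_general (hN : N ≠ 0) (hc0 : c ≠ 0) (hc1 : c ≠ 1) (ht : t ≠ 0)
    (hrel : 2 * c * t ^ 2 = (c - 1) ^ 2 * N) (h : IsDiscretePainleveA2E6 α t q p)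
    (hx : ∀ n : ℤ, x n / (c - 1) =
      q n * (q n ^ 2 + (t - p n) * q n + α) / (t * (q n ^ 2 + (t - p n) * q n - n - 1)))
    (hy : ∀ n : ℤ, -(2 * c * y n) / ((c - 1) * x n) =
      (q n ^ 3 * p n + (2 + 2 * (n : K) + α + t * p n - p n ^ 2) * q n ^ 2
        + ((n : K) + 1) * (t - 2 * p n) * q n - ((n : K) + 1) ^ 2) /
        (t * q n * (q n ^ 2 + (t - p n) * q n - n - 1)))
    (hxne : ∀ n, x n ≠ 0) (n : ℤ) :
    x n * x (n - 1) = 2 * N * c * y n * (y n - α / N) / (n + N * y n) ∧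
      2 * (y (n + 1) + y n) = 2 * α / N - (x n ^ 2 + (c - 1) * x n) / c := by
  have hc1' : c - 1 ≠ 0 := sub_ne_zero.mpr hc1
  have hκ : N * ((c - 1) / t) ^ 2 = 2 * c := by
    field_simp
    linear_combination -hrel
  have hx_third (m : ℤ) : x m = (c - 1) / t * thirdVar t q p (m - 1) := by
    rw [(div_eq_iff hc1').mp ((hx m).trans (h.x_ratio_eq m))]
    ring
  have hy_third (m : ℤ) : N * y m = q (m - 1) * thirdVar t q p (m - 1) := by
    have hxm := hxne m
    have hy_q := (hy m).trans (h.y_ratio_eq m)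
    have hxt := hx_third m
    field_simp at hy_q hxt
    apply mul_left_cancel₀ (pow_ne_zero 2 hc1')
    linear_combination -y m * hrel - t * hy_q + (c - 1) * q (m - 1) * hxt
  refine ⟨h.laguerre_mul hN hκ hx_third hy_third n, ?_⟩
  rw [h.laguerre_add hN hc0 hκ hx_third hy_third n, div_mul_cancel₀ _ ht]

end

/-- Solutions of the standard discrete Painlevé system of type d-P(A₂⁽¹⁾/E₆⁽¹⁾), under
the indicated change of variables, yield solutions of the discrete system from the
semi-classical Laguerre weight. -/
theorem stmt_2 (α N : ℂ) (hN : N ≠ 0) (c t : ℂ)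
    (hc0 : c ≠ 0) (hc1 : c ≠ 1) (ht : t ≠ 0)
    (hrel : 2 * c * t ^ 2 = (c - 1) ^ 2 * N)
    (q p x y : ℤ → ℂ)
    (hqne : ∀ n, q n ≠ 0) (hpne : ∀ n, p n ≠ 0)
    (hdP1 : ∀ n : ℤ, q (n + 1) + q n = p n - t - (2 + (n : ℂ) + α) / p n)
    (hdP2 : ∀ n : ℤ, p n + p (n - 1) = q n + t - (1 + (n : ℂ)) / q n)
    (hD : ∀ n : ℤ, (q n) ^ 2 + (t - p n) * q n - (n : ℂ) - 1 ≠ 0)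
    (hx : ∀ n : ℤ, x n / (c - 1) =
      q n * ((q n) ^ 2 + (t - p n) * q n + α) /
        (t * ((q n) ^ 2 + (t - p n) * q n - (n : ℂ) - 1)))
    (hy : ∀ n : ℤ, -(2 * c * y n) / ((c - 1) * x n) =
      ((q n) ^ 3 * p n + (2 + 2 * (n : ℂ) + α + t * p n - (p n) ^ 2) * (q n) ^ 2
        + ((n : ℂ) + 1) * (t - 2 * p n) * q n - ((n : ℂ) + 1) ^ 2) /
        (t * q n * ((q n) ^ 2 + (t - p n) * q n - (n : ℂ) - 1)))
    (hxne : ∀ n, x n ≠ 0)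
    (hyne : ∀ n : ℤ, (n : ℂ) + N * y n ≠ 0) :
    ∀ n : ℤ,
      x n * x (n - 1) = 2 * N * c * y n * (y n - α / N) / ((n : ℂ) + N * y n) ∧
      2 * (y (n + 1) + y n) = 2 * α / N - ((x n) ^ 2 + (c - 1) * x n) / c := by
  exact stmt_2_general hN hc0 hc1 ht hrel ⟨hqne, hpne, hdP1, hdP2⟩ hx hy hxne
end

section
/- Let a₀, a₁, a₂ ∈ ℂ with a₀ + a₁ + a₂ = 1. Suppose q and p are differentiable complex functions of t on an open set, with q(t) ≠ 0, satisfying the Hamiltonian form of the fourth Painlevé equation q' = q(2p − q − t) − a₁ and p' = p(2q − p + t) + a₂. Then q is twice differentiable and satisfies the scalar fourth Painlevé equation q'' = (q')²/(2q) + (3/2)·q³ + 2t·q² + (a₂ − a₀ + t²/2)·q − a₁²/(2q). -/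
/-!
Differentiating the equation for `q` expresses `q''` through `q`, `p`, `q'`, `p'`. Once `p'` is
substituted, `p` enters `2 * q * q''` only through `q * (2 * p - q - t)`, which equals `q' + a₁`,
so it is eliminated in favour of `q'`; dividing by `2 * q` gives the scalar equation.
-/

open Filter Topology

theorem hasDerivAt_deriv_of_eventually_hasDerivAt {𝕜 F : Type*} [NontriviallyNormedField 𝕜]
    [NormedAddCommGroup F] [NormedSpace 𝕜 F] {f g : 𝕜 → F} {g' : F} {t : 𝕜}
    (hf : ∀ᶠ s in 𝓝 t, HasDerivAt f (g s) s) (hg : HasDerivAt g g' t) :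
    HasDerivAt (deriv f) g' t :=
  hg.congr_of_eventuallyEq (hf.mono fun _ hs => hs.deriv)

theorem hasDerivAt_painleveIV_velocity {𝕜 : Type*} [NontriviallyNormedField 𝕜]
    {q p : 𝕜 → 𝕜} {q' p' t : 𝕜} (a₁ : 𝕜) (hq : HasDerivAt q q' t) (hp : HasDerivAt p p' t) :
    HasDerivAt (fun s => q s * (2 * p s - q s - s) - a₁)
      (q' * (2 * p t - q t - t) + q t * (2 * p' - q' - 1)) t :=
  (hq.mul (((hp.const_mul 2).sub hq).sub (hasDerivAt_id' t))).sub_const a₁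

theorem painleveIV_two_mul_mul_second_deriv_eq {R : Type*} [CommRing R] {a₀ a₁ a₂ t q p q' p' : R}
    (hnorm : a₀ + a₁ + a₂ = 1) (hq : q' = q * (2 * p - q - t) - a₁)
    (hp : p' = p * (2 * q - p + t) + a₂) :
    2 * q * (q' * (2 * p - q - t) + q * (2 * p' - q' - 1)) =
      q' ^ 2 + 3 * q ^ 4 + 4 * t * q ^ 3 + (2 * (a₂ - a₀) + t ^ 2) * q ^ 2 - a₁ ^ 2 := by
  subst hq hp
  linear_combination 2 * q ^ 2 * hnorm

theorem painleveIV_second_deriv_eq {K : Type*} [Field K] {a₀ a₁ a₂ t q p q' p' : K}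
    (h2 : (2 : K) ≠ 0) (hq0 : q ≠ 0) (hnorm : a₀ + a₁ + a₂ = 1)
    (hq : q' = q * (2 * p - q - t) - a₁) (hp : p' = p * (2 * q - p + t) + a₂) :
    q' * (2 * p - q - t) + q * (2 * p' - q' - 1) =
      q' ^ 2 / (2 * q) + (3 / 2) * q ^ 3 + 2 * t * q ^ 2
        + (a₂ - a₀ + t ^ 2 / 2) * q - a₁ ^ 2 / (2 * q) := by
  have cleared := painleveIV_two_mul_mul_second_deriv_eq hnorm hq hp
  field_simp
  linear_combination cleared

theorem stmt_3_general {𝕜 : Type*} [NontriviallyNormedField 𝕜] (h2 : (2 : 𝕜) ≠ 0)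
    {a₀ a₁ a₂ t : 𝕜} (hnorm : a₀ + a₁ + a₂ = 1) {q p : 𝕜 → 𝕜} (hqt : q t ≠ 0)
    (hq : ∀ᶠ s in 𝓝 t, HasDerivAt q (q s * (2 * p s - q s - s) - a₁) s)
    (hp : HasDerivAt p (p t * (2 * q t - p t + t) + a₂) t) :
    HasDerivAt (deriv q)
      ((deriv q t) ^ 2 / (2 * q t) + (3 / 2) * (q t) ^ 3 + 2 * t * (q t) ^ 2
        + (a₂ - a₀ + t ^ 2 / 2) * q t - a₁ ^ 2 / (2 * q t)) t := by
  have hqt' := hq.self_of_nhds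
  have second_deriv := hasDerivAt_deriv_of_eventually_hasDerivAt hq
    (hasDerivAt_painleveIV_velocity a₁ hqt' hp)
  rw [hqt'.deriv]
  exact second_deriv.congr_deriv (painleveIV_second_deriv_eq h2 hqt hnorm rfl rfl)

/-- The Hamiltonian form of the fourth Painlevé equation implies the scalar fourth
Painlevé equation for `q`. -/
theorem stmt_3 (a0 a1 a2 : ℂ) (hnorm : a0 + a1 + a2 = 1)
    (U : Set ℂ) (hU : IsOpen U) (q p : ℂ → ℂ)
    (hqne : ∀ t ∈ U, q t ≠ 0)
    (hq : ∀ t ∈ U, HasDerivAt q (q t * (2 * p t - q t - t) - a1) t)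
    (hp : ∀ t ∈ U, HasDerivAt p (p t * (2 * q t - p t + t) + a2) t) :
    ∀ t ∈ U, HasDerivAt (deriv q)
      ((deriv q t) ^ 2 / (2 * q t) + (3 / 2) * (q t) ^ 3 + 2 * t * (q t) ^ 2
        + (a2 - a0 + t ^ 2 / 2) * q t - a1 ^ 2 / (2 * q t)) t :=
  fun t ht => stmt_3_general two_ne_zero hnorm (hqne t ht)
    (eventually_of_mem (hU.mem_nhds ht) hq) (hp t ht)
end

section
/- Define the ℤ-linear map φ : Λ → Λ̃ by φ(H_x) = H_q, φ(H_y) = H_q + H_p − E₁ − E₃, φ(F₁) = H_q − E₃, φ(F₂) = E₄, φ(F₃) = E₂, φ(F₄) = H_q − E₁, φ(F₅) = E₅, φ(F₆) = E₆, φ(F₇) = E₇, φ(F₈) = E₈. Then: (i) φ preserves the intersection forms, i.e. φ(u)·φ(v) = u·v for all u, v ∈ Λ; (ii) φ is bijective with inverse determined by H_q ↦ H_x, H_p ↦ H_x + H_y − F₁ − F₄, E₁ ↦ H_x − F₄, E₂ ↦ F₃, E₃ ↦ H_x − F₁, E₄ ↦ F₂, E₅ ↦ F₅, E₆ ↦ F₆,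 E₇ ↦ F₇, E₈ ↦ F₈; (iii) φ maps the surface roots δ₀ = F₇−F₈, δ₁ = H_x−F₃−F₄, δ₂ = F₄−F₅, δ₃ = F₅−F₆, δ₄ = H_y−F₄−F₅, δ₅ = H_x−F₁−F₂, δ₆ = F₆−F₇ respectively to δ̃₀ = E₇−E₈, δ̃₁ = E₁−E₂, δ̃₂ = H_q−E₁−E₅, δ̃₃ = E₅−E₆, δ̃₄ = H_p−E₃−E₅, δ̃₅ = E₃−E₄, δ̃₆ = E₆−E₇. -/
/-- The standard basis vectors of a copy of `ℤ¹⁰`.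
For `Λ` the basis is `(H_x, H_y, F₁, …, F₈) = (latB 0, latB 1, latB 2, …, latB 9)`;
for `Λ̃` the basis is `(H_q, H_p, E₁, …, E₈) = (latB 0, latB 1, latB 2, …, latB 9)`. -/
def latB (i : Fin 10) : Fin 10 → ℤ := Pi.single i 1

/-- The intersection form: the two H-vectors have self-pairing 0 and mutual pairing 1,
H-vectors pair to 0 with the remaining basis vectors, and `Fᵢ·Fⱼ = −δᵢⱼ`. -/
def latIP (u v : Fin 10 → ℤ) : ℤ :=
  u 0 * v 1 + u 1 * v 0 - ∑ i : Fin 10, (if 2 ≤ (i : ℕ) then u i * v i else 0)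

/-!
Let `s` be the reflection in the `(-2)`-vector `α = H_x - F₁ - F₄`. Then `φ` is `s` followed by the
relabelling `H_x ↦ H_q`, `H_y ↦ H_p`, `F₁ ↦ E₁`, `F₂ ↦ E₄`, `F₃ ↦ E₂`, `F₄ ↦ E₃`, `Fᵢ ↦ Eᵢ` for
`5 ≤ i`, and `ψ` is the inverse relabelling followed by `s`. Both factors are isometries.
-/

open Module

theorem isOrthogonal_reflection_of_neg_apply_self {R M : Type*} [CommRing R] [AddCommGroup M]
    [Module R M] {B : LinearMap.BilinForm R M} (hB : B.IsSymm) {x : M} (hx : (-B x) x = 2) :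
    B.IsOrthogonal (reflection hx) := by
  have hxx : B x x = -2 := by rw [← hx, LinearMap.neg_apply, neg_neg]
  intro y z
  simp only [reflection_apply, LinearMap.neg_apply, map_sub, map_smul, LinearMap.sub_apply,
    LinearMap.smul_apply, smul_eq_mul, hB.eq y x, hxx]
  ring

theorem latIP_eq_sub_dotProduct (u v : Fin 10 → ℤ) :
    latIP u v = (u 0 + u 1) * (v 0 + v 1) - u ⬝ᵥ v := by
  have sum_tail : ∑ i : Fin 10, (if 2 ≤ (i : ℕ) then u i * v i else 0) =
      u ⬝ᵥ v - u 0 * v 0 - u 1 * v 1 := by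
    simp [dotProduct, Fin.sum_univ_succ (n := 9), Fin.sum_univ_succ (n := 8)]
  rw [latIP, sum_tail]
  ring

theorem latIP_comp_perm {σ : Equiv.Perm (Fin 10)} (hσ₀ : σ 0 = 0) (hσ₁ : σ 1 = 1)
    (u v : Fin 10 → ℤ) : latIP (u ∘ σ) (v ∘ σ) = latIP u v := by
  simp only [latIP_eq_sub_dotProduct, comp_equiv_dotProduct_comp_equiv, Function.comp_apply,
    hσ₀, hσ₁]

/-- The intersection form `latIP` as a bilinear form. -/
def latForm : LinearMap.BilinForm ℤ (Fin 10 → ℤ) :=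
  LinearMap.mk₂ ℤ latIP
    (fun u u' v ↦ by simp only [latIP_eq_sub_dotProduct, add_dotProduct, Pi.add_apply]; ring)
    (fun c u v ↦ by
      simp only [latIP_eq_sub_dotProduct, smul_dotProduct, Pi.smul_apply, smul_eq_mul]; ring)
    (fun u v v' ↦ by simp only [latIP_eq_sub_dotProduct, dotProduct_add, Pi.add_apply]; ring)
    (fun c u v ↦ by
      simp only [latIP_eq_sub_dotProduct, dotProduct_smul, Pi.smul_apply, smul_eq_mul]; ring)

theorem latForm_apply (u v : Fin 10 → ℤ) : latForm u v = latIP u v := rfl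

theorem latForm_isSymm : latForm.IsSymm :=
  ⟨fun u v ↦ by
    simp only [latForm_apply, latIP_eq_sub_dotProduct, dotProduct_comm u v, mul_comm (u 0 + u 1)]⟩

theorem linearMap_ext_latB {M : Type*} [AddCommMonoid M] [Module ℤ M]
    {f g : (Fin 10 → ℤ) →ₗ[ℤ] M} (h : ∀ i, f (latB i) = g (latB i)) : f = g :=
  (Pi.basisFun ℤ (Fin 10)).ext fun i ↦ by simpa only [Pi.basisFun_apply, latB] using h i

/-- The vector `α = H_x - F₁ - F₄` of self-intersection `-2`, whose reflection carries the part of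
`φ` that is not a relabelling of basis vectors. -/
def reflectionRoot : Fin 10 → ℤ := latB 0 - latB 2 - latB 5

theorem neg_latForm_reflectionRoot_self : (-latForm reflectionRoot) reflectionRoot = 2 := by decide

/-- The permutation of basis indices by which `φ` differs from the reflection in `α`. Since `Fᵢ` and
`Eᵢ` have index `i + 1`, it encodes `F₂ ↦ E₄`, `F₄ ↦ E₃` and `F₃ ↦ E₂`. -/
def indexRelabelling : Equiv.Perm (Fin 10) := c[3, 5, 4]

/-- The map `φ : Λ → Λ̃` as the reflection in `α` followed by the relabelling. The relabelling acts
on coordinates, hence by precomposition with the inverse permutation. -/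
def picardEquiv : (Fin 10 → ℤ) ≃ₗ[ℤ] (Fin 10 → ℤ) :=
  reflection neg_latForm_reflectionRoot_self ≪≫ₗ LinearEquiv.funCongrLeft ℤ ℤ indexRelabelling.symm

theorem picardEquiv_latB (i : Fin 10) :
    picardEquiv (latB i) =
      ![latB 0, latB 0 + latB 1 - latB 2 - latB 4, latB 0 - latB 4, latB 5, latB 3,
        latB 0 - latB 2, latB 6, latB 7, latB 8, latB 9] i := by
  decide +revert

theorem picardEquiv_symm_latB (i : Fin 10) :
    picardEquiv.symm (latB i) =
      ![latB 0, latB 0 + latB 1 - latB 2 - latB 5, latB 0 - latB 5, latB 4, latB 0 - latB 2,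
        latB 3, latB 6, latB 7, latB 8, latB 9] i := by
  decide +revert

theorem latIP_picardEquiv (u v : Fin 10 → ℤ) :
    latIP (picardEquiv u) (picardEquiv v) = latIP u v :=
  (latIP_comp_perm (by decide) (by decide) _ _).trans
    (isOrthogonal_reflection_of_neg_apply_self latForm_isSymm neg_latForm_reflectionRoot_self u v)

/-- The identification of the Picard lattices for the semi-classical Laguerre weight
(`E₆⁽¹⁾`-surfaces): `φ` preserves the intersection form, is bijective with the given
inverse `ψ`, and matches the surface root bases. -/
theorem stmt_5 (φ ψ : (Fin 10 → ℤ) →ₗ[ℤ] (Fin 10 → ℤ))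
    -- φ(H_x) = H_q
    (hφ0 : φ (latB 0) = latB 0)
    -- φ(H_y) = H_q + H_p − E₁ − E₃
    (hφ1 : φ (latB 1) = latB 0 + latB 1 - latB 2 - latB 4)
    -- φ(F₁) = H_q − E₃
    (hφ2 : φ (latB 2) = latB 0 - latB 4)
    -- φ(F₂) = E₄
    (hφ3 : φ (latB 3) = latB 5)
    -- φ(F₃) = E₂
    (hφ4 : φ (latB 4) = latB 3)
    -- φ(F₄) = H_q − E₁
    (hφ5 : φ (latB 5) = latB 0 - latB 2)
    -- φ(F₅) = E₅, φ(F₆) = E₆, φ(F₇) = E₇, φ(F₈) = E₈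
    (hφ6 : φ (latB 6) = latB 6)
    (hφ7 : φ (latB 7) = latB 7)
    (hφ8 : φ (latB 8) = latB 8)
    (hφ9 : φ (latB 9) = latB 9)
    -- ψ(H_q) = H_x
    (hψ0 : ψ (latB 0) = latB 0)
    -- ψ(H_p) = H_x + H_y − F₁ − F₄
    (hψ1 : ψ (latB 1) = latB 0 + latB 1 - latB 2 - latB 5)
    -- ψ(E₁) = H_x − F₄
    (hψ2 : ψ (latB 2) = latB 0 - latB 5)
    -- ψ(E₂) = F₃
    (hψ3 : ψ (latB 3) = latB 4)
    -- ψ(E₃) = H_x − F₁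
    (hψ4 : ψ (latB 4) = latB 0 - latB 2)
    -- ψ(E₄) = F₂
    (hψ5 : ψ (latB 5) = latB 3)
    -- ψ(E₅) = F₅, ψ(E₆) = F₆, ψ(E₇) = F₇, ψ(E₈) = F₈
    (hψ6 : ψ (latB 6) = latB 6)
    (hψ7 : ψ (latB 7) = latB 7)
    (hψ8 : ψ (latB 8) = latB 8)
    (hψ9 : ψ (latB 9) = latB 9) :
    -- (i) φ preserves the intersection forms
    (∀ u v, latIP (φ u) (φ v) = latIP u v) ∧
    -- (ii) φ is bijective with inverse ψ
    Function.Bijective φ ∧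
    (∀ u, ψ (φ u) = u) ∧ (∀ u, φ (ψ u) = u) ∧
    -- (iii) φ maps the surface roots δᵢ to δ̃ᵢ
    -- δ₀ = F₇−F₈ ↦ δ̃₀ = E₇−E₈
    φ (latB 8 - latB 9) = latB 8 - latB 9 ∧
    -- δ₁ = H_x−F₃−F₄ ↦ δ̃₁ = E₁−E₂
    φ (latB 0 - latB 4 - latB 5) = latB 2 - latB 3 ∧
    -- δ₂ = F₄−F₅ ↦ δ̃₂ = H_q−E₁−E₅
    φ (latB 5 - latB 6) = latB 0 - latB 2 - latB 6 ∧
    -- δ₃ = F₅−F₆ ↦ δ̃₃ = E₅−E₆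
    φ (latB 6 - latB 7) = latB 6 - latB 7 ∧
    -- δ₄ = H_y−F₄−F₅ ↦ δ̃₄ = H_p−E₃−E₅
    φ (latB 1 - latB 5 - latB 6) = latB 1 - latB 4 - latB 6 ∧
    -- δ₅ = H_x−F₁−F₂ ↦ δ̃₅ = E₃−E₄
    φ (latB 0 - latB 2 - latB 3) = latB 4 - latB 5 ∧
    -- δ₆ = F₆−F₇ ↦ δ̃₆ = E₆−E₇
    φ (latB 7 - latB 8) = latB 7 - latB 8 := by
  obtain rfl : φ = picardEquiv := linearMap_ext_latB fun i ↦ by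
    rw [LinearEquiv.coe_coe, picardEquiv_latB]
    fin_cases i <;> assumption
  obtain rfl : ψ = picardEquiv.symm := linearMap_ext_latB fun i ↦ by
    rw [LinearEquiv.coe_coe, picardEquiv_symm_latB]
    fin_cases i <;> assumption
  refine ⟨latIP_picardEquiv, picardEquiv.bijective, picardEquiv.symm_apply_apply,
    picardEquiv.apply_symm_apply, ?_, ?_, ?_, ?_, ?_, ?_, ?_⟩ <;>
  simp only [map_sub, hφ0, hφ1, hφ2, hφ3, hφ4, hφ5, hφ6, hφ7, hφ8, hφ9] <;>
  abel
end

section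
/- Let α, β, γ, n ∈ ℂ and let x, y be differentiable functions satisfying the hypergeometric-weight differential system on an open set of values of c avoiding {0, 1}. Set t = 1/c and define f(t) = −(x−β)(x−γ)/(c(nx − αβ + (α+β)x − x² + y)) and g(t) = −(x−γ)(β(γ−β−αc) + (α+β)cx − γx − (c−1)x² + n(x−β+cx) + cy)/((x−β)(x−γ) + c(nx − αβ + (α+β)x − x² + y)), where x = x(1/t), y = y(1/t), c = 1/t, assuming all displayed denominators are nonzero. Then f and g are differentiable in t and satisfy: t(t−1)f' = (1+2n+α+2β−2γ+2g)f² + (β−γ+2g)t − f(1 + n(1+t) + α + β + 2tβ − 2γ − tγ + 2(1+t)g), and t(t−1)f·g' = t(β−γ+g)g − (1+n+β−γ+g)(n+α+β−γ+g)f². -/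
/-- `P₁` from the hypergeometric-weight differential system. -/
noncomputable def P1 (α β γ n x y c : ℂ) : ℂ :=
  (1 - c) * x ^ 4 + (-α - β + 2 * c * (α + β + n) - γ - 1) * x ^ 3
    + (α * (β + γ + 1) + β * γ + β - c * (β ^ 2 + 2 * β * (2 * α + n) + (α + n) ^ 2) + γ)
      * x ^ 2
    + (α * β * (2 * c * (α + β + n) - 1) - γ * (α * β + α + β)) * x
    + α * β * (γ - α * β * c)
    + 2 * c * y * (x ^ 2 - (α + β + n) * x + α * β) - c * y ^ 2

/-- `P₂` from the hypergeometric-weight differential system. -/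
noncomputable def P2 (α β γ n x y _c : ℂ) : ℂ :=
  n * (α ^ 2 + α * β - α + β ^ 2 - β + γ + n ^ 2 - γ * (α + β + n)
      + 2 * α * n + 2 * β * n - n) * x ^ 2
    - 2 * α * β * n * (α + β - γ + n - 1) * x + n * α * β * (α * β - γ)
    + y * ((α + β - γ + 2 * n - 1) * x ^ 2
        + 2 * (-(α * β) + γ + n ^ 2 + n * (α + β - γ - 1)) * x
        - α * γ - β * γ + α * β * (γ - 2 * n + 1))
    + y ^ 2 * (2 * x - γ + n - 1)

/-- `Q` from the hypergeometric-weight differential system. -/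
noncomputable def Qd (α β γ n x y c : ℂ) : ℂ :=
  c * (c - 1) * (α * β - (n + α + β) * x + x ^ 2 - y)

/-!
Put `W = n x - α β + (α + β) x - x² + y` and `A(x) = (x - 1) (x - α) (x - β) (x - γ)`. In terms of
`x` and `W` the hypergeometric-weight system reads
* `c (c - 1) x' = c W - A(x) / W`,
* `c (c - 1) W' = ((n + α + β - 2 x) c - (2 x + n - γ - 1)) W - A'(x)`.

Passing to `t = 1 / c` and replacing `W` by `f = -(x - β) (x - γ) / (c W)` makes it polynomial:
* `t (t - 1) f x' = (x - 1) (x - α) f² - t (x - β) (x - γ)`,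
* `t (t - 1) f' = (f - 1) ((1 + α - 2 x) f - (β + γ - 2 x) t) + (n + β) (t - 1) f`.

Finally `g = γ - x - (n + β) f / (f - 1)`, and eliminating `x` in favour of `g` gives the claim.
-/

open scoped Topology

/-- The shift `W` of `y` in which the hypergeometric-weight system simplifies; the factor
`α β - (n + α + β) x + x² - y` of `Qd` is `-W`. -/
def shiftedY {R : Type*} [CommRing R] (α β n x y : R) : R :=
  n * x - α * β + (α + β) * x - x ^ 2 + y

section Coordinates

variable {𝕜 : Type*} [Field 𝕜]

/-- The new unknown `f` as a function of `c`, `x` and `W = shiftedY α β n x y`. -/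
def fCoord (β γ c x W : 𝕜) : 𝕜 :=
  -((x - β) * (x - γ)) / (c * W)

/-- The new unknown `g` as a function of `c`, `x` and `W = shiftedY α β n x y`. -/
def gCoord (β γ n c x W : 𝕜) : 𝕜 :=
  -((x - γ) * ((x - β) * (x - γ) + c * W + (n + β) * (x - β))) / ((x - β) * (x - γ) + c * W)

theorem fCoord_mul_cancel (β γ x : 𝕜) {c W : 𝕜} (hcW : c * W ≠ 0) :
    fCoord β γ c x W * (c * W) = -((x - β) * (x - γ)) :=
  div_mul_cancel₀ _ hcW

theorem fCoord_ne_one {β γ c x W : 𝕜} (hcW : c * W ≠ 0) (hD : (x - β) * (x - γ) + c * W ≠ 0) :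
    fCoord β γ c x W ≠ 1 := by
  intro hf
  apply hD
  linear_combination fCoord_mul_cancel β γ x hcW - c * W * hf

theorem gCoord_eq {β γ n c x W : 𝕜} (hcW : c * W ≠ 0) (hD : (x - β) * (x - γ) + c * W ≠ 0) :
    gCoord β γ n c x W =
      γ - x - (n + β) * (fCoord β γ c x W / (fCoord β γ c x W - 1)) := by
  have hf := fCoord_mul_cancel β γ x hcW
  have hf1 : fCoord β γ c x W - 1 ≠ 0 := sub_ne_zero.2 (fCoord_ne_one hcW hD)
  have hratio : fCoord β γ c x W / (fCoord β γ c x W - 1)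
      = (x - β) * (x - γ) / ((x - β) * (x - γ) + c * W) := by
    rw [div_eq_div_iff hf1 hD]
    linear_combination hf
  rw [hratio, gCoord, div_eq_iff hD]
  linear_combination (n + β) * div_mul_cancel₀ ((x - β) * (x - γ)) hD

end Coordinates

section Systems

variable {𝕜 : Type*} [NontriviallyNormedField 𝕜]

/-- `x` and `W` satisfy at `c` the hypergeometric-weight system written in terms of `x` and
`W = shiftedY α β n x y`; the two products subtracted last in the second equation add up to
the derivative of `(x - 1) (x - α) (x - β) (x - γ)`. -/
structure IsXWSolutionAt (α β γ n : 𝕜) (x W : 𝕜 → 𝕜) (c : 𝕜) : Prop where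
  hasDerivAt_x : HasDerivAt x
    ((c * W c - (x c - 1) * (x c - α) * (x c - β) * (x c - γ) / W c) / (c * (c - 1))) c
  hasDerivAt_W : HasDerivAt W
    ((((n + α + β - 2 * x c) * c - (2 * x c + n - γ - 1)) * W c
      - (2 * x c - 1 - α) * ((x c - β) * (x c - γ))
      - (x c - 1) * (x c - α) * (2 * x c - β - γ)) / (c * (c - 1))) c

/-- `x` and `f`, regarded as functions of `t = 1 / c`, satisfy at `t` the polynomial system obtained
by eliminating `W` in favour of `f`. -/
structure IsXFSolutionAt (α β γ n : 𝕜) (x f : 𝕜 → 𝕜) (t : 𝕜) : Prop where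
  differentiableAt_x : DifferentiableAt 𝕜 x t
  differentiableAt_f : DifferentiableAt 𝕜 f t
  deriv_x : t * (t - 1) * f t * deriv x t =
    (x t - 1) * (x t - α) * f t ^ 2 - t * ((x t - β) * (x t - γ))
  deriv_f : t * (t - 1) * deriv f t =
    (f t - 1) * ((1 + α - 2 * x t) * f t - (β + γ - 2 * x t) * t) + (n + β) * (t - 1) * f t

theorem hasDerivAt_shiftedY (α β n : 𝕜) {x y : 𝕜 → 𝕜} {x' y' c : 𝕜}
    (hx : HasDerivAt x x' c) (hy : HasDerivAt y y' c) :
    HasDerivAt (fun s => shiftedY α β n (x s) (y s)) ((n + α + β - 2 * x c) * x' + y') c := by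
  have h := ((((hx.const_mul n).sub_const (α * β)).add (hx.const_mul (α + β))).sub
    (hx.fun_pow 2)).add hy
  refine h.congr_deriv ?_
  push_cast
  ring

theorem hasDerivAt_comp_inv {φ : 𝕜 → 𝕜} {a t : 𝕜} (ht : t ≠ 0) (ht1 : t ≠ 1)
    (hφ : HasDerivAt φ (a / (t⁻¹ * (t⁻¹ - 1))) t⁻¹) :
    HasDerivAt (fun s => φ s⁻¹) (a / (t - 1)) t := by
  refine (hφ.comp t (hasDerivAt_inv ht)).congr_deriv ?_
  have ht1' : t - 1 ≠ 0 := sub_ne_zero.2 ht1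
  have ht1'' : 1 - t ≠ 0 := sub_ne_zero.2 ht1.symm
  field_simp
  ring

theorem isXFSolutionAt_fCoord {α β γ n : 𝕜} {x W : 𝕜 → 𝕜} {t : 𝕜}
    (ht : t ≠ 0) (ht1 : t ≠ 1) (hW0 : W t ≠ 0)
    (hx : HasDerivAt x
      ((t⁻¹ * W t - (x t - 1) * (x t - α) * (x t - β) * (x t - γ) / W t) / (t - 1)) t)
    (hW : HasDerivAt W
      ((((n + α + β - 2 * x t) * t⁻¹ - (2 * x t + n - γ - 1)) * W t
        - (2 * x t - 1 - α) * ((x t - β) * (x t - γ))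
        - (x t - 1) * (x t - α) * (2 * x t - β - γ)) / (t - 1)) t) :
    IsXFSolutionAt α β γ n x (fun s => fCoord β γ s⁻¹ (x s) (W s)) t := by
  have hf : HasDerivAt (fun s => fCoord β γ s⁻¹ (x s) (W s)) _ t :=
    ((hx.sub_const β).fun_mul (hx.sub_const γ)).fun_neg.fun_div
      ((hasDerivAt_inv ht).fun_mul hW) (mul_ne_zero (inv_ne_zero ht) hW0)
  have ht1' : t - 1 ≠ 0 := sub_ne_zero.2 ht1
  refine ⟨hx.differentiableAt, hf.differentiableAt, ?_, ?_⟩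
  · rw [hx.deriv, fCoord]
    field_simp
    ring
  · rw [hf.deriv, fCoord]
    field_simp
    ring

theorem IsXWSolutionAt.isXFSolutionAt {α β γ n : 𝕜} {x W : 𝕜 → 𝕜} {t : 𝕜}
    (h : IsXWSolutionAt α β γ n x W t⁻¹) (ht : t ≠ 0) (ht1 : t ≠ 1) (hW : W t⁻¹ ≠ 0) :
    IsXFSolutionAt α β γ n (fun s => x s⁻¹) (fun s => fCoord β γ s⁻¹ (x s⁻¹) (W s⁻¹)) t :=
  isXFSolutionAt_fCoord ht ht1 hW (hasDerivAt_comp_inv ht ht1 h.hasDerivAt_x)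
    (hasDerivAt_comp_inv ht ht1 h.hasDerivAt_W)

theorem IsXFSolutionAt.deriv_f_eq_of_g {α β γ n : 𝕜} {x f : 𝕜 → 𝕜} {t g : 𝕜}
    (h : IsXFSolutionAt α β γ n x f t) (hf1 : f t ≠ 1)
    (hg : g = γ - x t - (n + β) * (f t / (f t - 1))) :
    t * (t - 1) * deriv f t =
      (1 + 2 * n + α + 2 * β - 2 * γ + 2 * g) * f t ^ 2 + (β - γ + 2 * g) * t
        - f t * (1 + n * (1 + t) + α + β + 2 * t * β - 2 * γ - t * γ + 2 * (1 + t) * g) := by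
  have hf1' : f t - 1 ≠ 0 := sub_ne_zero.2 hf1
  rw [h.deriv_f, hg]
  field_simp
  ring

theorem IsXFSolutionAt.hasDerivAt_g {α β γ n : 𝕜} {x f : 𝕜 → 𝕜} {t : 𝕜}
    (h : IsXFSolutionAt α β γ n x f t) (hf1 : f t ≠ 1) :
    HasDerivAt (fun s => γ - x s - (n + β) * (f s / (f s - 1)))
      (-deriv x t + (n + β) * (deriv f t / (f t - 1) ^ 2)) t := by
  have hf := h.differentiableAt_f.hasDerivAt
  have hquot := hf.fun_div (hf.sub_const 1) (sub_ne_zero.2 hf1)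
  refine ((h.differentiableAt_x.hasDerivAt.const_sub γ).sub
    (hquot.const_mul (n + β))).congr_deriv ?_
  ring

theorem IsXFSolutionAt.deriv_g_eq {α β γ n : 𝕜} {x f : 𝕜 → 𝕜} {t g g' : 𝕜}
    (h : IsXFSolutionAt α β γ n x f t) (hf1 : f t ≠ 1)
    (hg : g = γ - x t - (n + β) * (f t / (f t - 1)))
    (hg' : g' = -deriv x t + (n + β) * (deriv f t / (f t - 1) ^ 2)) :
    t * (t - 1) * f t * g' =
      t * (β - γ + g) * g - (1 + n + β - γ + g) * (n + α + β - γ + g) * f t ^ 2 := by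
  have hf1' : f t - 1 ≠ 0 := sub_ne_zero.2 hf1
  calc t * (t - 1) * f t * g'
      = -(t * (t - 1) * f t * deriv x t)
          + (n + β) * f t * (t * (t - 1) * deriv f t) / (f t - 1) ^ 2 := by rw [hg']; ring
    _ = t * (β - γ + g) * g - (1 + n + β - γ + g) * (n + α + β - γ + g) * f t ^ 2 := by
        rw [h.deriv_x, h.deriv_f, hg]
        field_simp
        ring

end Systems

section HypergeometricWeight

variable (α β γ n x y c : ℂ)

theorem P1_eq_shiftedY : P1 α β γ n x y c =
    (x - 1) * (x - α) * (x - β) * (x - γ) - c * shiftedY α β n x y ^ 2 := by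
  unfold P1 shiftedY
  ring

theorem P2_eq_shiftedY : P2 α β γ n x y c =
    (2 * x + n - γ - 1) * shiftedY α β n x y ^ 2
      + ((2 * x - 1 - α) * ((x - β) * (x - γ)) + (x - 1) * (x - α) * (2 * x - β - γ))
        * shiftedY α β n x y
      + (2 * x - n - α - β) * ((x - 1) * (x - α) * (x - β) * (x - γ)) := by
  unfold P2 shiftedY
  ring

theorem Qd_eq_shiftedY : Qd α β γ n x y c = -(c * (c - 1) * shiftedY α β n x y) := by
  unfold Qd shiftedY
  ring

end HypergeometricWeight

theorem isXWSolutionAt_shiftedY {α β γ n c : ℂ} {x y : ℂ → ℂ}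
    (hQ : Qd α β γ n (x c) (y c) c ≠ 0)
    (hx : HasDerivAt x (P1 α β γ n (x c) (y c) c / Qd α β γ n (x c) (y c) c) c)
    (hy : HasDerivAt y (P2 α β γ n (x c) (y c) c / Qd α β γ n (x c) (y c) c) c) :
    IsXWSolutionAt α β γ n x (fun s => shiftedY α β n (x s) (y s)) c := by
  have hW := hasDerivAt_shiftedY α β n hx hy
  rw [Qd_eq_shiftedY] at hQ
  obtain ⟨⟨hc, hc1⟩, hW0⟩ : (c ≠ 0 ∧ c - 1 ≠ 0) ∧ shiftedY α β n (x c) (y c) ≠ 0 := by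
    simpa only [neg_ne_zero, mul_ne_zero_iff] using hQ
  constructor
  · refine hx.congr_deriv ?_
    rw [P1_eq_shiftedY, Qd_eq_shiftedY]
    field_simp
    ring
  · refine hW.congr_deriv ?_
    rw [P1_eq_shiftedY, P2_eq_shiftedY, Qd_eq_shiftedY]
    field_simp
    ring

/-- The hypergeometric-weight differential system, under the change of variables
`t = 1/c`, `f`, `g` as in (transf), becomes the `(f,g)`-system equivalent to the sixth
Painlevé equation. -/
theorem stmt_7 (α β γ n : ℂ) (U : Set ℂ) (hU : IsOpen U)
    (hc0 : ∀ c ∈ U, c ≠ 0) (hc1 : ∀ c ∈ U, c ≠ 1)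
    (x y f g : ℂ → ℂ)
    (hQ : ∀ c ∈ U, Qd α β γ n (x c) (y c) c ≠ 0)
    (hx : ∀ c ∈ U, HasDerivAt x
      (P1 α β γ n (x c) (y c) c / Qd α β γ n (x c) (y c) c) c)
    (hy : ∀ c ∈ U, HasDerivAt y
      (P2 α β γ n (x c) (y c) c / Qd α β γ n (x c) (y c) c) c)
    (hf : ∀ t : ℂ, f t = -((x t⁻¹ - β) * (x t⁻¹ - γ)) /
      (t⁻¹ * (n * x t⁻¹ - α * β + (α + β) * x t⁻¹ - (x t⁻¹) ^ 2 + y t⁻¹)))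
    (hg : ∀ t : ℂ, g t = -((x t⁻¹ - γ) *
        (β * (γ - β - α * t⁻¹) + (α + β) * t⁻¹ * x t⁻¹ - γ * x t⁻¹
          - (t⁻¹ - 1) * (x t⁻¹) ^ 2 + n * (x t⁻¹ - β + t⁻¹ * x t⁻¹) + t⁻¹ * y t⁻¹)) /
      ((x t⁻¹ - β) * (x t⁻¹ - γ)
        + t⁻¹ * (n * x t⁻¹ - α * β + (α + β) * x t⁻¹ - (x t⁻¹) ^ 2 + y t⁻¹)))
    (hden1 : ∀ c ∈ U, c * (n * x c - α * β + (α + β) * x c - (x c) ^ 2 + y c) ≠ 0)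
    (hden2 : ∀ c ∈ U, (x c - β) * (x c - γ)
      + c * (n * x c - α * β + (α + β) * x c - (x c) ^ 2 + y c) ≠ 0) :
    ∀ c ∈ U,
      DifferentiableAt ℂ f c⁻¹ ∧ DifferentiableAt ℂ g c⁻¹ ∧
      c⁻¹ * (c⁻¹ - 1) * deriv f c⁻¹ =
        (1 + 2 * n + α + 2 * β - 2 * γ + 2 * g c⁻¹) * (f c⁻¹) ^ 2
          + (β - γ + 2 * g c⁻¹) * c⁻¹
          - f c⁻¹ * (1 + n * (1 + c⁻¹) + α + β + 2 * c⁻¹ * β - 2 * γ - c⁻¹ * γ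
              + 2 * (1 + c⁻¹) * g c⁻¹) ∧
      c⁻¹ * (c⁻¹ - 1) * f c⁻¹ * deriv g c⁻¹ =
        c⁻¹ * (β - γ + g c⁻¹) * g c⁻¹
          - (1 + n + β - γ + g c⁻¹) * (n + α + β - γ + g c⁻¹) * (f c⁻¹) ^ 2 := by
  intro c hc
  obtain ⟨t, rfl⟩ := inv_surjective c
  have ht : t ≠ 0 := fun h => hc0 _ hc (by rw [h, inv_zero])
  have ht1 : t ≠ 1 := fun h => hc1 _ hc (by rw [h, inv_one])
  let W : ℂ → ℂ := fun s => shiftedY α β n (x s) (y s)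
  obtain rfl : f = fun s => fCoord β γ s⁻¹ (x s⁻¹) (W s⁻¹) := funext hf
  have hg_coord (s : ℂ) : g s = gCoord β γ n s⁻¹ (x s⁻¹) (W s⁻¹) := by
    rw [hg]
    simp only [gCoord, W, shiftedY]
    ring
  have hxf := (isXWSolutionAt_shiftedY (hQ _ hc) (hx _ hc) (hy _ hc)).isXFSolutionAt ht ht1
    (right_ne_zero_of_mul (hden1 _ hc))
  have hf1 := fCoord_ne_one (hden1 _ hc) (hden2 _ hc)
  have hU_inv : ∀ᶠ s in 𝓝 t, s⁻¹ ∈ U := (continuousAt_inv₀ ht).eventually (hU.mem_nhds hc)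
  have hg_near := hU_inv.mono fun s hs =>
    (hg_coord s).trans (gCoord_eq (hden1 _ hs) (hden2 _ hs))
  have hg' := (hxf.hasDerivAt_g hf1).congr_of_eventuallyEq hg_near
  rw [inv_inv]
  exact ⟨hxf.differentiableAt_f, hg'.differentiableAt,
    hxf.deriv_f_eq_of_g hf1 hg_near.self_of_nhds,
    hxf.deriv_g_eq hf1 hg_near.self_of_nhds hg'.deriv⟩
end

section
/- Let α, β, γ, n ∈ ℂ, and suppose f, g are differentiable complex functions of t on an open set with t ∉ {0,1} and f(t) ∉ {0, 1, t}, satisfying t(t−1)f' = (1+2n+α+2β−2γ+2g)f² + (β−γ+2g)t − f(1 + n(1+t) + α + β + 2tβ − 2γ − tγ + 2(1+t)g) and t(t−1)f·g' = t(β−γ+g)g − (1+n+β−γ+g)(n+α+β−γ+g)f². Then f is twice differentiable and satisfies the sixth Painlevé equation with parameters A = (α−1)²/2, B = −(β−γ)²/2, C = (n+β)²/2, D = 1/2 − (n+α−γ)²/2. -/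
/-- The right-hand side of the sixth Painlevé equation with parameters `A, B, C, D`,
evaluated at independent variable `t`, function value `fv`, and derivative `f'`. -/
noncomputable def P6RHS (A B C D t fv f' : ℂ) : ℂ :=
  (1 / 2) * (1 / fv + 1 / (fv - 1) + 1 / (fv - t)) * f' ^ 2
    - (1 / t + 1 / (t - 1) + 1 / (fv - t)) * f'
    + (fv * (fv - 1) * (fv - t) / (t ^ 2 * (t - 1) ^ 2))
      * (A + B * t / fv ^ 2 + C * (t - 1) / (fv - 1) ^ 2
          + D * t * (t - 1) / (fv - t) ^ 2)

/-!
Put `y = 2 g + β - γ` and `κ₀ = β - γ`, `κ₁ = n + β`, `κₜ = n + α - γ`, `κᵢ = α - 1`.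
Expanding the first equation in the basis `(f-1)(f-t)`, `f(f-t)`, `f(f-1)` of quadratics in `f`,
and completing squares in the second, turns the system into

* `t(t-1) f' = y (f-1)(f-t) + κ₁ f(f-t) + (κₜ+1) f(f-1)`,
* `t(t-1) f y' = (t (y² - κ₀²) - f² ((y + κ₁ + κₜ + 1)² - κᵢ²)) / 2`,

whose parameters are those of the Painlevé equation: `A = κᵢ²/2`, `B = -κ₀²/2`, `C = κ₁²/2`,
`D = (1 - κₜ²)/2`. The right-hand side of the first equation is differentiable along a solution, so
`f` is twice differentiable; differentiating it and eliminating `y'` by the second equation gives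
the Painlevé equation, the squares `κ₀²` and `κᵢ²` being contributed by `y'` alone.
-/

open Topology

section Calculus

variable {𝕜 : Type*} [NontriviallyNormedField 𝕜]

theorem hasDerivAt_of_mul_eventuallyEq {p q u : 𝕜 → 𝕜} {p' q' t : 𝕜}
    (hp : HasDerivAt p p' t) (hq : HasDerivAt q q' t) (hpt : p t ≠ 0)
    (hu : ∀ᶠ s in 𝓝 t, p s * u s = q s) :
    HasDerivAt u ((q' - p' * u t) / p t) t := by
  have u_eq_div : u =ᶠ[𝓝 t] fun s => q s / p s := by
    filter_upwards [hu, hp.continuousAt.eventually_ne hpt] with s hs hps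
    exact eq_div_of_mul_eq hps (mul_comm (u s) (p s) ▸ hs)
  refine ((hq.fun_div hp hpt).congr_of_eventuallyEq u_eq_div).congr_deriv ?_
  rw [← hu.self_of_nhds]
  field_simp

theorem hasDerivAt_mul_sub_one (t : 𝕜) : HasDerivAt (fun s => s * (s - 1)) (2 * t - 1) t :=
  ((hasDerivAt_id' t).fun_mul ((hasDerivAt_id' t).sub_const 1)).congr_deriv (by ring)

end Calculus

section SymmetricForm

variable {𝕜 : Type*}

/-- The right-hand side of the equation for `t (t - 1) x'` in the symmetric form of the system.
It is `x (x - 1) (x - t)` times `y / x + κ₁ / (x - 1) + (κₜ + 1) / (x - t)`, written without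
denominators. -/
def positionField [CommRing 𝕜] (κ₁ κₜ t x y : 𝕜) : 𝕜 :=
  y * (x - 1) * (x - t) + κ₁ * x * (x - t) + (κₜ + 1) * x * (x - 1)

/-- The right-hand side of the equation for `t (t - 1) x y'` in the symmetric form of the system,
where `y` is an affine function of the unknown `g`. The exponent `κᵢ` is the one attached to the
point at infinity. -/
def momentumField [Field 𝕜] (κ₀ κ₁ κₜ κᵢ t x y : 𝕜) : 𝕜 :=
  (t * (y ^ 2 - κ₀ ^ 2) - x ^ 2 * ((y + κ₁ + κₜ + 1) ^ 2 - κᵢ ^ 2)) / 2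

/-- The derivative of `positionField κ₁ κₜ t x y` in `t` when `x` and `y` move with velocities `v`
and `w`. -/
def positionFieldDeriv [CommRing 𝕜] (κ₁ κₜ t x y v w : 𝕜) : 𝕜 :=
  (x - 1) * (x - t) * w
    + (y * (2 * x - 1 - t) + κ₁ * (2 * x - t) + (κₜ + 1) * (2 * x - 1)) * v
    - (y * (x - 1) + κ₁ * x)

theorem hasDerivAt_positionField [NontriviallyNormedField 𝕜] (κ₁ κₜ : 𝕜) {x y : 𝕜 → 𝕜} {v w t : 𝕜}
    (hx : HasDerivAt x v t) (hy : HasDerivAt y w t) :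
    HasDerivAt (fun s => positionField κ₁ κₜ s (x s) (y s))
      (positionFieldDeriv κ₁ κₜ t (x t) (y t) v w) t := by
  have hx_sub_one := hx.sub_const 1
  have hx_sub_t := hx.fun_sub (hasDerivAt_id' t)
  refine ((((hy.fun_mul hx_sub_one).fun_mul hx_sub_t).fun_add
    ((hx.const_mul κ₁).fun_mul hx_sub_t)).fun_add
    ((hx.const_mul (κₜ + 1)).fun_mul hx_sub_one)).congr_deriv ?_
  rw [positionFieldDeriv]
  ring

end SymmetricForm

section PainleveSix

variable {t x : ℂ}

theorem sq_mul_P6RHS (A B C D v : ℂ) (ht0 : t ≠ 0) (ht1 : t - 1 ≠ 0) :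
    (t * (t - 1)) ^ 2 * P6RHS A B C D t x v =
      (1 / x + 1 / (x - 1) + 1 / (x - t)) / 2 * (t * (t - 1) * v) ^ 2
        - (2 * t - 1 + t * (t - 1) / (x - t)) * (t * (t - 1) * v)
        + x * (x - 1) * (x - t) * (A + B * t / x ^ 2 + C * (t - 1) / (x - 1) ^ 2
          + D * t * (t - 1) / (x - t) ^ 2) := by
  rw [P6RHS]
  field_simp
  ring

theorem P6RHS_eq_of_symmetric_system {κ₀ κ₁ κₜ κᵢ y v w : ℂ} (ht0 : t ≠ 0) (ht1 : t - 1 ≠ 0)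
    (hx0 : x ≠ 0) (hx1 : x - 1 ≠ 0) (hxt : x - t ≠ 0)
    (hv : t * (t - 1) * v = positionField κ₁ κₜ t x y)
    (hw : t * (t - 1) * x * w = momentumField κ₀ κ₁ κₜ κᵢ t x y) :
    P6RHS (κᵢ ^ 2 / 2) (-κ₀ ^ 2 / 2) (κ₁ ^ 2 / 2) (1 / 2 - κₜ ^ 2 / 2) t x v =
      (positionFieldDeriv κ₁ κₜ t x y v w - (2 * t - 1) * v) / (t * (t - 1)) := by
  have hT : t * (t - 1) ≠ 0 := mul_ne_zero ht0 ht1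
  have hw' : t * (t - 1) * w = momentumField κ₀ κ₁ κₜ κᵢ t x y / x :=
    eq_div_of_mul_eq hx0 (by rw [← hw]; ring)
  have scaled_deriv : t * (t - 1) * (positionFieldDeriv κ₁ κₜ t x y v w - (2 * t - 1) * v) =
      (x - 1) * (x - t) * (t * (t - 1) * w)
        + (y * (2 * x - 1 - t) + κ₁ * (2 * x - t) + (κₜ + 1) * (2 * x - 1)) * (t * (t - 1) * v)
        - t * (t - 1) * (y * (x - 1) + κ₁ * x) - (2 * t - 1) * (t * (t - 1) * v) := by
    rw [positionFieldDeriv]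
    ring
  refine mul_left_cancel₀ (pow_ne_zero 2 hT) ?_
  calc
    _ = t * (t - 1) * (positionFieldDeriv κ₁ κₜ t x y v w - (2 * t - 1) * v) := by
      rw [sq_mul_P6RHS _ _ _ _ _ ht0 ht1, scaled_deriv, hv, hw']
      rw [positionField, momentumField]
      field_simp
      ring
    _ = _ := by field_simp

theorem hasDerivAt_deriv_P6RHS_of_symmetric_system {κ₀ κ₁ κₜ κᵢ w : ℂ} {f y : ℂ → ℂ}
    (ht0 : t ≠ 0) (ht1 : t ≠ 1) (hf0 : f t ≠ 0) (hf1 : f t ≠ 1) (hft : f t ≠ t)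
    (hf : DifferentiableAt ℂ f t) (hy : HasDerivAt y w t)
    (hpos : ∀ᶠ s in 𝓝 t, s * (s - 1) * deriv f s = positionField κ₁ κₜ s (f s) (y s))
    (hmom : t * (t - 1) * f t * w = momentumField κ₀ κ₁ κₜ κᵢ t (f t) (y t)) :
    HasDerivAt (deriv f)
      (P6RHS (κᵢ ^ 2 / 2) (-κ₀ ^ 2 / 2) (κ₁ ^ 2 / 2) (1 / 2 - κₜ ^ 2 / 2) t (f t) (deriv f t))
      t := by
  have ht1' : t - 1 ≠ 0 := sub_ne_zero.2 ht1
  have hfield := hasDerivAt_positionField κ₁ κₜ hf.hasDerivAt hy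
  have second_deriv := hasDerivAt_of_mul_eventuallyEq (hasDerivAt_mul_sub_one t) hfield
    (mul_ne_zero ht0 ht1') hpos
  exact second_deriv.congr_deriv (P6RHS_eq_of_symmetric_system ht0 ht1' hf0 (sub_ne_zero.2 hf1)
    (sub_ne_zero.2 hft) hpos.self_of_nhds hmom).symm

end PainleveSix

/-- The `(f,g)`-system obtained from the hypergeometric weight is equivalent to the
sixth Painlevé equation for `f` with parameters `A = (α−1)²/2`, `B = −(β−γ)²/2`,
`C = (n+β)²/2`, `D = 1/2 − (n+α−γ)²/2`. -/
theorem stmt_8 (α β γ n : ℂ) (U : Set ℂ) (hU : IsOpen U)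
    (f g df dg : ℂ → ℂ)
    (ht0 : ∀ t ∈ U, t ≠ 0) (ht1 : ∀ t ∈ U, t ≠ 1)
    (hf0 : ∀ t ∈ U, f t ≠ 0) (hf1 : ∀ t ∈ U, f t ≠ 1) (hft : ∀ t ∈ U, f t ≠ t)
    (hf : ∀ t ∈ U, HasDerivAt f (df t) t)
    (hg : ∀ t ∈ U, HasDerivAt g (dg t) t)
    (hsys1 : ∀ t ∈ U, t * (t - 1) * df t =
      (1 + 2 * n + α + 2 * β - 2 * γ + 2 * g t) * (f t) ^ 2 + (β - γ + 2 * g t) * t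
        - f t * (1 + n * (1 + t) + α + β + 2 * t * β - 2 * γ - t * γ
            + 2 * (1 + t) * g t))
    (hsys2 : ∀ t ∈ U, t * (t - 1) * f t * dg t =
      t * (β - γ + g t) * g t
        - (1 + n + β - γ + g t) * (n + α + β - γ + g t) * (f t) ^ 2) :
    ∀ t ∈ U, HasDerivAt (deriv f)
      (P6RHS ((α - 1) ^ 2 / 2) (-(β - γ) ^ 2 / 2) ((n + β) ^ 2 / 2)
        (1 / 2 - (n + α - γ) ^ 2 / 2) t (f t) (deriv f t)) t := by
  intro t ht
  have hy : HasDerivAt (fun s => 2 * g s + (β - γ)) (2 * dg t) t :=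
    ((hg t ht).const_mul 2).add_const _
  have position_eq : ∀ᶠ s in 𝓝 t, s * (s - 1) * deriv f s =
      positionField (n + β) (n + α - γ) s (f s) (2 * g s + (β - γ)) := by
    filter_upwards [hU.mem_nhds ht] with s hs
    rw [(hf s hs).deriv, hsys1 s hs, positionField]
    ring
  have momentum_eq : t * (t - 1) * f t * (2 * dg t) =
      momentumField (β - γ) (n + β) (n + α - γ) (α - 1) t (f t) (2 * g t + (β - γ)) := by
    rw [mul_left_comm, hsys2 t ht, momentumField]
    ring
  exact hasDerivAt_deriv_P6RHS_of_symmetric_system (ht0 t ht) (ht1 t ht) (hf0 t ht) (hf1 t ht)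
    (hft t ht) (hf t ht).differentiableAt hy position_eq momentum_eq
end

section
/- Let α, β, γ, n ∈ ℂ and let x, y be differentiable functions satisfying the hypergeometric-weight differential system on an open set of values of c avoiding {0, 1}. Set t = 1/c and define f(t) = −(x−β)(x−γ)/(c(nx − αβ + (α+β)x − x² + y)) and g(t) = γ − x, where x = x(1/t), y = y(1/t), c = 1/t, assuming the displayed denominator is nonzero. Then f and g are differentiable in t and satisfy the standard Hamiltonian form of the sixth Painlevé equation in the form: t(t−1)f' = (1+α−2γ+2g)f² + t(β−γ+2g) + (n(t−1) − 1 − α − β + γ(2+t) − 2(t+1)g)f, and t(t−1)f·g' = (γ−1−g)(α−γ+g)f² + t(β−γ+g)g. -/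
/-!
In the coordinates `x` and `w = (n + α + β) x - α β - x² + y`, with
`p(X) = (X - 1) (X - α) (X - β) (X - γ)`, the hypergeometric-weight system reads

* `c (c - 1) w x' = c w² - p(x)`,
* `c (c - 1) w' = -(p'(x) + (2 (1 + c) x + n (1 - c) - c (α + β) - γ - 1) w)`.

Since `f = -(x - β) (x - γ) / (c w)` contains two of the four factors of `p`, the quotient
`p(x) / (c w)` is `-(x - 1) (x - α) f`. Together with `t (t - 1) d/dt = (c - 1) d/dc` for
`t = 1 / c`, this turns the two equations into the sixth Painlevé system.
-/

open Polynomial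

/-- The coordinate `w` replacing `y`: the factor that `Q` and the denominator of `f` have in
common, up to sign. -/
def denomFactor {R : Type*} [CommRing R] (α β n x y : R) : R :=
  n * x - α * β + (α + β) * x - x ^ 2 + y

/-- The polynomial `p` giving the part of `P₁` that is left at `w = 0`. -/
noncomputable def weightQuartic {R : Type*} [CommRing R] (α β γ : R) : R[X] :=
  (X - 1) * (X - C α) * (X - C β) * (X - C γ)

/-- The coefficient of `w` in the equation for `-c (c - 1) w'`. -/
def dampingCoeff {R : Type*} [CommRing R] (α β γ n c x : R) : R :=
  2 * (1 + c) * x + n * (1 - c) - c * (α + β) - γ - 1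

/-- The Painlevé variable `f` as a function of `c`, `x` and `w`. -/
def painleveCoord {K : Type*} [Field K] (β γ c x w : K) : K :=
  -((x - β) * (x - γ)) / (c * w)

/-- The functions `x` and `w` solve the hypergeometric-weight system, written in the
coordinates `(x, w)`, at a point `c` where its denominator does not vanish. -/
structure IsReducedSolutionAt {𝕜 : Type*} [NontriviallyNormedField 𝕜] (α β γ n : 𝕜)
    (x w : 𝕜 → 𝕜) (c : 𝕜) : Prop where
  ne_zero : c ≠ 0
  sub_one_ne_zero : c - 1 ≠ 0
  w_ne_zero : w c ≠ 0
  hasDerivAt_x : HasDerivAt x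
    ((c * w c ^ 2 - (weightQuartic α β γ).eval (x c)) / (c * (c - 1) * w c)) c
  hasDerivAt_w : HasDerivAt w
    (-((weightQuartic α β γ).derivative.eval (x c) + dampingCoeff α β γ n c (x c) * w c) /
      (c * (c - 1))) c

/-- The functions `f` and `g` solve the sixth Painlevé equation in Hamiltonian form at `t`. The
second equation is multiplied by `f`, which may vanish. -/
def IsPainleveSolutionAt {𝕜 : Type*} [NontriviallyNormedField 𝕜] (α β γ n : 𝕜)
    (f g : 𝕜 → 𝕜) (t : 𝕜) : Prop :=
  DifferentiableAt 𝕜 f t ∧ DifferentiableAt 𝕜 g t ∧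
  t * (t - 1) * deriv f t =
    (1 + α - 2 * γ + 2 * g t) * f t ^ 2 + t * (β - γ + 2 * g t)
      + (n * (t - 1) - 1 - α - β + γ * (2 + t) - 2 * (t + 1) * g t) * f t ∧
  t * (t - 1) * f t * deriv g t =
    (γ - 1 - g t) * (α - γ + g t) * f t ^ 2 + t * (β - γ + g t) * g t

theorem eval_weightQuartic {R : Type*} [CommRing R] (α β γ x : R) :
    (weightQuartic α β γ).eval x = (x - 1) * (x - α) * ((x - β) * (x - γ)) := by
  simp only [weightQuartic, eval_mul, eval_sub, eval_X, eval_one, eval_C]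
  ring

theorem eval_derivative_weightQuartic {R : Type*} [CommRing R] (α β γ x : R) :
    (weightQuartic α β γ).derivative.eval x =
      (2 * x - 1 - α) * ((x - β) * (x - γ)) + (x - 1) * (x - α) * (2 * x - β - γ) := by
  simp only [weightQuartic, derivative_mul, derivative_sub, derivative_X, derivative_one,
    derivative_C, eval_add, eval_mul, eval_sub, eval_X, eval_one, eval_C, eval_zero]
  ring

section Coordinates

variable (α β γ n x y c : ℂ)

theorem Qd_eq_neg_mul_denomFactor :
    Qd α β γ n x y c = -(c * (c - 1) * denomFactor α β n x y) := by
  unfold Qd denomFactor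
  ring

theorem P1_eq_weightQuartic_sub :
    P1 α β γ n x y c = (weightQuartic α β γ).eval x - c * denomFactor α β n x y ^ 2 := by
  rw [eval_weightQuartic]
  unfold P1 denomFactor
  ring

theorem mul_P1_add_P2_eq_denomFactor_mul :
    (n + α + β - 2 * x) * P1 α β γ n x y c + P2 α β γ n x y c =
      denomFactor α β n x y * ((weightQuartic α β γ).derivative.eval x
        + dampingCoeff α β γ n c x * denomFactor α β n x y) := by
  rw [eval_derivative_weightQuartic]
  unfold P1 P2 denomFactor dampingCoeff
  ring

end Coordinates

section Calculus

variable {𝕜 : Type*} [NontriviallyNormedField 𝕜] {x y w : 𝕜 → 𝕜} {x' y' w' c : 𝕜}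

theorem hasDerivAt_denomFactor (α β n : 𝕜) (hx : HasDerivAt x x' c) (hy : HasDerivAt y y' c) :
    HasDerivAt (fun c ↦ denomFactor α β n (x c) (y c)) ((n + α + β - 2 * x c) * x' + y') c := by
  have hsum := ((((hx.const_mul n).sub_const (α * β)).add (hx.const_mul (α + β))).sub
    (hx.pow 2)).add hy
  refine hsum.congr_deriv ?_
  push_cast
  ring

theorem hasDerivAt_painleveCoord (β γ : 𝕜) (hx : HasDerivAt x x' c) (hw : HasDerivAt w w' c)
    (hc : c ≠ 0) (hwc : w c ≠ 0) :
    HasDerivAt (fun c ↦ painleveCoord β γ c (x c) (w c))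
      (-((2 * x c - β - γ) * x') / (c * w c)
        - painleveCoord β γ c (x c) (w c) * (1 / c + w' / w c)) c := by
  have hquot := ((hx.sub_const β).mul (hx.sub_const γ)).neg.div ((hasDerivAt_id' c).mul hw)
    (mul_ne_zero hc hwc)
  refine hquot.congr_deriv ?_
  simp only [painleveCoord, Pi.mul_apply, Pi.neg_apply]
  field_simp
  ring

theorem hasDerivAt_comp_inv_s9 {u : 𝕜 → 𝕜} {u' : 𝕜} (hu : HasDerivAt u u' c) (hc : c ≠ 0) :
    HasDerivAt (fun t ↦ u t⁻¹) (u' * -c ^ 2) c⁻¹ := by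
  have hinv : HasDerivAt (fun t : 𝕜 ↦ t⁻¹) (-c ^ 2) c⁻¹ := by
    simpa using hasDerivAt_inv (inv_ne_zero hc)
  exact HasDerivAt.comp_of_eq c⁻¹ hu hinv (inv_inv c).symm

theorem inv_mul_inv_sub_one_mul_deriv_comp_inv {u : 𝕜 → 𝕜} (hu : DifferentiableAt 𝕜 u c)
    (hc : c ≠ 0) :
    c⁻¹ * (c⁻¹ - 1) * deriv (fun t ↦ u t⁻¹) c⁻¹ = (c - 1) * deriv u c := by
  rw [(hasDerivAt_comp_inv_s9 hu.hasDerivAt hc).deriv]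
  field_simp
  ring

end Calculus

namespace IsReducedSolutionAt

theorem of_hypergeometricSystem {α β γ n c : ℂ} {x y : ℂ → ℂ} (hc0 : c ≠ 0) (hc1 : c ≠ 1)
    (hw : denomFactor α β n (x c) (y c) ≠ 0)
    (hx : HasDerivAt x (P1 α β γ n (x c) (y c) c / Qd α β γ n (x c) (y c) c) c)
    (hy : HasDerivAt y (P2 α β γ n (x c) (y c) c / Qd α β γ n (x c) (y c) c) c) :
    IsReducedSolutionAt α β γ n x (fun c ↦ denomFactor α β n (x c) (y c)) c where
  ne_zero := hc0
  sub_one_ne_zero := sub_ne_zero.mpr hc1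
  w_ne_zero := hw
  hasDerivAt_x := by
    refine hx.congr_deriv ?_
    rw [P1_eq_weightQuartic_sub, Qd_eq_neg_mul_denomFactor, div_neg, ← neg_div, neg_sub]
  hasDerivAt_w := by
    refine (hasDerivAt_denomFactor α β n hx hy).congr_deriv ?_
    rw [mul_div_assoc', ← add_div, mul_P1_add_P2_eq_denomFactor_mul, Qd_eq_neg_mul_denomFactor,
      mul_comm (c * (c - 1)), ← mul_neg, mul_div_mul_left _ _ hw, div_neg, neg_div]

variable {𝕜 : Type*} [NontriviallyNormedField 𝕜] {α β γ n c : 𝕜} {x w : 𝕜 → 𝕜}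

theorem sub_one_mul_deriv_x (h : IsReducedSolutionAt α β γ n x w c) :
    (c - 1) * deriv x c =
      w c + (x c - 1) * (x c - α) * painleveCoord β γ c (x c) (w c) := by
  have hc0 := h.ne_zero
  have hc1 := h.sub_one_ne_zero
  have hw := h.w_ne_zero
  rw [h.hasDerivAt_x.deriv, eval_weightQuartic, painleveCoord]
  field_simp
  ring

theorem differentiableAt_painleveCoord (h : IsReducedSolutionAt α β γ n x w c) :
    DifferentiableAt 𝕜 (fun c ↦ painleveCoord β γ c (x c) (w c)) c :=
  (hasDerivAt_painleveCoord β γ h.hasDerivAt_x h.hasDerivAt_w h.ne_zero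
    h.w_ne_zero).differentiableAt

theorem sub_one_mul_deriv_painleveCoord (h : IsReducedSolutionAt α β γ n x w c) :
    (c - 1) * deriv (fun c ↦ painleveCoord β γ c (x c) (w c)) c =
      (1 + α - 2 * x c) * painleveCoord β γ c (x c) (w c) ^ 2 + c⁻¹ * (β + γ - 2 * x c)
        + c⁻¹ * (dampingCoeff α β γ n c (x c) + 1 - c) * painleveCoord β γ c (x c) (w c) := by
  have hc0 := h.ne_zero
  have hc1 := h.sub_one_ne_zero
  have hw := h.w_ne_zero
  rw [(hasDerivAt_painleveCoord β γ h.hasDerivAt_x h.hasDerivAt_w hc0 hw).deriv,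
    eval_weightQuartic, eval_derivative_weightQuartic]
  unfold painleveCoord
  field_simp
  ring

theorem isPainleveSolutionAt_inv (h : IsReducedSolutionAt α β γ n x w c) :
    IsPainleveSolutionAt α β γ n (fun t ↦ painleveCoord β γ t⁻¹ (x t⁻¹) (w t⁻¹))
      (fun t ↦ γ - x t⁻¹) c⁻¹ := by
  have hc0 := h.ne_zero
  have hf := h.differentiableAt_painleveCoord
  have hg : DifferentiableAt 𝕜 (fun c ↦ γ - x c) c :=
    h.hasDerivAt_x.differentiableAt.const_sub γ
  refine ⟨(hasDerivAt_comp_inv_s9 hf.hasDerivAt hc0).differentiableAt,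
    (hasDerivAt_comp_inv_s9 hg.hasDerivAt hc0).differentiableAt, ?_, ?_⟩
  · rw [inv_mul_inv_sub_one_mul_deriv_comp_inv hf hc0, h.sub_one_mul_deriv_painleveCoord]
    simp only [inv_inv, dampingCoeff]
    field_simp
    ring
  · have hfw : painleveCoord β γ c (x c) (w c) * w c = -(c⁻¹ * ((x c - β) * (x c - γ))) := by
      have hw := h.w_ne_zero
      unfold painleveCoord
      field_simp
    have hg' : c⁻¹ * (c⁻¹ - 1) * deriv (fun t ↦ γ - x t⁻¹) c⁻¹ =
        -(w c + (x c - 1) * (x c - α) * painleveCoord β γ c (x c) (w c)) := by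
      rw [inv_mul_inv_sub_one_mul_deriv_comp_inv hg hc0, deriv_const_sub, mul_neg,
        h.sub_one_mul_deriv_x]
    simp only [inv_inv]
    linear_combination painleveCoord β γ c (x c) (w c) * hg' - hfw

end IsReducedSolutionAt

/-- The hypergeometric-weight differential system, under the change of variables
`t = 1/c`, `f` as in (transf initial) and `g = γ − x`, becomes the standard
Hamiltonian form of the sixth Painlevé equation (system `fginitial`). -/
theorem stmt_9 (α β γ n : ℂ) (U : Set ℂ) (hU : IsOpen U)
    (hc0 : ∀ c ∈ U, c ≠ 0) (hc1 : ∀ c ∈ U, c ≠ 1)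
    (x y f g : ℂ → ℂ)
    (hQ : ∀ c ∈ U, Qd α β γ n (x c) (y c) c ≠ 0)
    (hx : ∀ c ∈ U, HasDerivAt x
      (P1 α β γ n (x c) (y c) c / Qd α β γ n (x c) (y c) c) c)
    (hy : ∀ c ∈ U, HasDerivAt y
      (P2 α β γ n (x c) (y c) c / Qd α β γ n (x c) (y c) c) c)
    (hf : ∀ t : ℂ, f t = -((x t⁻¹ - β) * (x t⁻¹ - γ)) /
      (t⁻¹ * (n * x t⁻¹ - α * β + (α + β) * x t⁻¹ - (x t⁻¹) ^ 2 + y t⁻¹)))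
    (hg : ∀ t : ℂ, g t = γ - x t⁻¹)
    (hden : ∀ c ∈ U, c * (n * x c - α * β + (α + β) * x c - (x c) ^ 2 + y c) ≠ 0) :
    ∀ c ∈ U,
      DifferentiableAt ℂ f c⁻¹ ∧ DifferentiableAt ℂ g c⁻¹ ∧
      c⁻¹ * (c⁻¹ - 1) * deriv f c⁻¹ =
        (1 + α - 2 * γ + 2 * g c⁻¹) * (f c⁻¹) ^ 2
          + c⁻¹ * (β - γ + 2 * g c⁻¹)
          + (n * (c⁻¹ - 1) - 1 - α - β + γ * (2 + c⁻¹) - 2 * (c⁻¹ + 1) * g c⁻¹)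
            * f c⁻¹ ∧
      c⁻¹ * (c⁻¹ - 1) * f c⁻¹ * deriv g c⁻¹ =
        (γ - 1 - g c⁻¹) * (α - γ + g c⁻¹) * (f c⁻¹) ^ 2
          + c⁻¹ * (β - γ + g c⁻¹) * g c⁻¹ := by
  intro c hc
  have hw : denomFactor α β n (x c) (y c) ≠ 0 := right_ne_zero_of_mul (hden c hc)
  have hsol := IsReducedSolutionAt.of_hypergeometricSystem (hc0 c hc) (hc1 c hc) hw (hx c hc)
    (hy c hc)
  rw [funext hf, funext hg]
  exact hsol.isPainleveSolutionAt_inv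
end

section
/- Let α, β, γ, n ∈ ℂ. Define s(x,y) = x² − (n+α+β)x − y + αβ and K(x,y,c) = (1/(c−1))·( (x−1)(x−α)(x−β)(x−γ)/(c(αβ − (n+α+β)x + x² − y)) − x(x+n−1−γ)/c − y ). If x, y are differentiable functions satisfying the hypergeometric-weight differential system at a point c with c ∉ {0,1} and s(x(c), y(c)) ≠ 0, then the system is Hamiltonian with respect to the symplectic form dx∧dy/s with Hamiltonian K; that is, x'(c)/s(x(c),y(c)) = ∂K/∂y evaluated at (x(c),y(c),c), and y'(c)/s(x(c),y(c)) = −∂K/∂x evaluated at (x(c),y(c),c). -/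
/-- `s(x,y) = x² − (n+α+β)x − y + αβ`. -/
noncomputable def sHW (α β n x y : ℂ) : ℂ := x ^ 2 - (n + α + β) * x - y + α * β

/-- The Hamiltonian of the hypergeometric-weight differential system. -/
noncomputable def KHW (α β γ n x y c : ℂ) : ℂ :=
  (1 / (c - 1)) * ((x - 1) * (x - α) * (x - β) * (x - γ) /
      (c * (α * β - (n + α + β) * x + x ^ 2 - y))
    - x * (x + n - 1 - γ) / c - y)

/-! In terms of the gap `s = f(x) - y`, where `f(x) = x² - (n+α+β)x + αβ`, the Hamiltonian is
`K = (N(x) / (c s) - M(x) / c - y) / (c - 1)` with `N(x) = (x-1)(x-α)(x-β)(x-γ)` and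
`M(x) = x(x+n-1-γ)`. Since `∂s/∂y = -1` and `∂s/∂x = f'(x)`, Hamilton's equations amount to the
polynomial identities `P₁ = N - c s²` and `P₂ = N f' - N' s + M' s²`. -/

section GapHamiltonian

variable {𝕜 : Type*} [NontriviallyNormedField 𝕜]

/-- The Hamiltonian `k (N(x) / (c (f(x) - y)) - M(x) / c - y)`, singular along the curve
`y = f(x)`, for arbitrary functions `N`, `M`, `f` of `x`. `KHW` is the case `k = 1 / (c - 1)` with
polynomial `N`, `M`, `f`. -/
def gapHamiltonian (k c : 𝕜) (N M f : 𝕜 → 𝕜) (x y : 𝕜) : 𝕜 :=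
  k * (N x / (c * (f x - y)) - M x / c - y)

variable {k c x y : 𝕜} {N M f : 𝕜 → 𝕜}

theorem deriv_gapHamiltonian_right (hc : c ≠ 0) (hgap : f x - y ≠ 0) :
    deriv (fun v => gapHamiltonian k c N M f x v) y =
      k * (N x - c * (f x - y) ^ 2) / (c * (f x - y) ^ 2) := by
  have hden : HasDerivAt (fun v => c * (f x - v)) (c * -1) y :=
    ((hasDerivAt_id' y).const_sub (f x)).const_mul c
  have hquot := (hasDerivAt_const y (N x)).fun_div hden (mul_ne_zero hc hgap)
  have hH := ((hquot.sub_const (M x / c)).fun_sub (hasDerivAt_id' y)).const_mul k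
  simp only [gapHamiltonian]
  rw [hH.deriv]
  field_simp
  ring

theorem deriv_gapHamiltonian_left (hc : c ≠ 0) (hgap : f x - y ≠ 0)
    (hN : DifferentiableAt 𝕜 N x) (hM : DifferentiableAt 𝕜 M x) (hf : DifferentiableAt 𝕜 f x) :
    deriv (fun u => gapHamiltonian k c N M f u y) x =
      -(k * (N x * deriv f x - deriv N x * (f x - y) + deriv M x * (f x - y) ^ 2) /
        (c * (f x - y) ^ 2)) := by
  have hden : HasDerivAt (fun u => c * (f u - y)) (c * deriv f x) x :=
    (hf.hasDerivAt.sub_const y).const_mul c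
  have hquot := hN.hasDerivAt.fun_div hden (mul_ne_zero hc hgap)
  have hH := ((hquot.fun_sub (hM.hasDerivAt.div_const c)).sub_const y).const_mul k
  simp only [gapHamiltonian]
  rw [hH.deriv]
  field_simp
  ring

end GapHamiltonian

section HypergeometricWeight

/-- The function `f` whose graph `y = f(x)` is the zero locus of `sHW`. -/
def singularParabola (α β n x : ℂ) : ℂ := α * β - (n + α + β) * x + x ^ 2

/-- The numerator `N` of the singular term of `KHW`. -/
def parameterQuartic (α β γ x : ℂ) : ℂ := (x - 1) * (x - α) * (x - β) * (x - γ)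

/-- The function `M` in the term `-M(x) / c` of `KHW`. -/
def regularQuadratic (γ n x : ℂ) : ℂ := x * (x + n - 1 - γ)

variable (α β γ n x y c : ℂ)

theorem hasDerivAt_singularParabola :
    HasDerivAt (singularParabola α β n) (2 * x - (n + α + β)) x :=
  ((((hasDerivAt_id' x).const_mul (n + α + β)).const_sub (α * β)).fun_add
    (hasDerivAt_pow 2 x)).congr_deriv (by push_cast; ring)

theorem hasDerivAt_parameterQuartic :
    HasDerivAt (parameterQuartic α β γ)
      ((x - α) * (x - β) * (x - γ) + (x - 1) * (x - β) * (x - γ)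
        + (x - 1) * (x - α) * (x - γ) + (x - 1) * (x - α) * (x - β)) x :=
  have hlin (a : ℂ) : HasDerivAt (fun u => u - a) 1 x := (hasDerivAt_id' x).sub_const a
  ((((hlin 1).fun_mul (hlin α)).fun_mul (hlin β)).fun_mul (hlin γ)).congr_deriv (by ring)

theorem hasDerivAt_regularQuadratic :
    HasDerivAt (regularQuadratic γ n) (2 * x + n - 1 - γ) x :=
  ((hasDerivAt_id' x).fun_mul
    ((((hasDerivAt_id' x).add_const n).sub_const 1).sub_const γ)).congr_deriv (by ring)

theorem KHW_eq_gapHamiltonian :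
    KHW α β γ n x y c = gapHamiltonian (1 / (c - 1)) c (parameterQuartic α β γ)
      (regularQuadratic γ n) (singularParabola α β n) x y :=
  rfl

theorem sHW_eq_singularParabola_sub : sHW α β n x y = singularParabola α β n x - y := by
  unfold sHW singularParabola
  ring

theorem Qd_eq_mul_sHW : Qd α β γ n x y c = c * (c - 1) * sHW α β n x y := by
  unfold Qd sHW
  ring

theorem P1_eq_parameterQuartic_sub :
    P1 α β γ n x y c = parameterQuartic α β γ x - c * sHW α β n x y ^ 2 := by
  unfold P1 parameterQuartic sHW
  ring

theorem P2_eq_parameterQuartic_mul_deriv_sub_add :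
    P2 α β γ n x y c = parameterQuartic α β γ x * deriv (singularParabola α β n) x
      - deriv (parameterQuartic α β γ) x * sHW α β n x y
      + deriv (regularQuadratic γ n) x * sHW α β n x y ^ 2 := by
  rw [(hasDerivAt_singularParabola α β n x).deriv, (hasDerivAt_parameterQuartic α β γ x).deriv,
    (hasDerivAt_regularQuadratic γ n x).deriv]
  unfold P2 parameterQuartic sHW
  ring

variable {α β γ n x y c}

theorem deriv_KHW_right (hc : c ≠ 0) (hs : sHW α β n x y ≠ 0) :
    deriv (fun v => KHW α β γ n x v c) y =
      P1 α β γ n x y c / Qd α β γ n x y c / sHW α β n x y := by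
  rw [P1_eq_parameterQuartic_sub, Qd_eq_mul_sHW]
  rw [sHW_eq_singularParabola_sub] at hs ⊢
  simp only [KHW_eq_gapHamiltonian]
  rw [deriv_gapHamiltonian_right hc hs]
  field_simp

theorem deriv_KHW_left (hc : c ≠ 0) (hs : sHW α β n x y ≠ 0) :
    deriv (fun u => KHW α β γ n u y c) x =
      -(P2 α β γ n x y c / Qd α β γ n x y c / sHW α β n x y) := by
  rw [P2_eq_parameterQuartic_mul_deriv_sub_add, Qd_eq_mul_sHW]
  rw [sHW_eq_singularParabola_sub] at hs ⊢
  simp only [KHW_eq_gapHamiltonian]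
  rw [deriv_gapHamiltonian_left hc hs (hasDerivAt_parameterQuartic α β γ x).differentiableAt
    (hasDerivAt_regularQuadratic γ n x).differentiableAt
    (hasDerivAt_singularParabola α β n x).differentiableAt]
  field_simp

end HypergeometricWeight

/-- The hypergeometric-weight differential system is Hamiltonian with respect to the
symplectic form `dx∧dy/s` with Hamiltonian `KHW`. -/
theorem stmt_10 (α β γ n c : ℂ) (hc0 : c ≠ 0) (hc1 : c ≠ 1)
    (x y : ℂ → ℂ) (dx dy : ℂ)
    (hx : HasDerivAt x dx c) (hy : HasDerivAt y dy c)
    (hs : sHW α β n (x c) (y c) ≠ 0)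
    (hsys1 : dx = P1 α β γ n (x c) (y c) c / Qd α β γ n (x c) (y c) c)
    (hsys2 : dy = P2 α β γ n (x c) (y c) c / Qd α β γ n (x c) (y c) c) :
    dx / sHW α β n (x c) (y c) = deriv (fun v => KHW α β γ n (x c) v c) (y c) ∧
    dy / sHW α β n (x c) (y c) = -deriv (fun u => KHW α β γ n u (y c) c) (x c) := by
  rw [deriv_KHW_right hc0 hs, deriv_KHW_left hc0 hs, neg_neg, hsys1, hsys2]
  exact ⟨rfl, rfl⟩
end

section
/- Let α, β, γ ∈ ℂ with γ not a nonpositive integer. For |c| < 1 define the convergent power series F(c) = Σ_{k≥0} ((α)ₖ(β)ₖ/((γ)ₖ·k!))·cᵏ and G(c) = Σ_{k≥0} ((α+1)ₖ(β+1)ₖ/((γ+1)ₖ·k!))·cᵏ, where (z)ₖ denotes the Pochhammer symbol (rising factorial). Define x₀(c) = (αβc/γ)·G(c)/F(c) + ((α+β)c − γ)/(c−1). Then at every c with |c| < 1, c ∉ {0,1} and F(c) ≠ 0, the function x₀ satisfies the Riccati equation c(c−1)x₀' + (c−1)x₀² + (1 − c(α+β) + γ)x₀ + αβc − γ = 0.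 -/
/-- The Gauss hypergeometric series `₂F₁(α, β; γ; c) = Σ_{k≥0} (α)ₖ(β)ₖ/((γ)ₖ·k!)·cᵏ`,
where `(z)ₖ` is the Pochhammer symbol (rising factorial). -/
noncomputable def hypF (α β γ c : ℂ) : ℂ :=
  ∑' k : ℕ, ((ascPochhammer ℂ k).eval α * (ascPochhammer ℂ k).eval β /
    ((ascPochhammer ℂ k).eval γ * (k.factorial : ℂ))) * c ^ k

/-!
Write `F = ₂F₁(α, β; γ; ·)`. Differentiating the series termwise gives
`F' = (αβ/γ) ₂F₁(α + 1, β + 1; γ + 1; ·)`, so that `x₀` is `c` times the logarithmic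
derivative of `F` plus a rational function. The recurrence
`(γ + n)(n + 1) aₙ₊₁ = (α + n)(β + n) aₙ` for the coefficients of `F` amounts to
Gauss's linear equation
`c (1 - c) F'' + (γ - (α + β + 1) c) F' - αβ F = 0`,
and passing to the logarithmic derivative turns it into the Riccati equation.
-/

open FormalMultilinearSeries Topology

section PowerSeries

theorem hasSum_mul_pow_of_hasSum_succ {R : Type*} [CommSemiring R] [TopologicalSpace R]
    [IsTopologicalSemiring R] {b : ℕ → R} {x s : R} (hb : b 0 = 0)
    (h : HasSum (fun n ↦ b (n + 1) * x ^ n) s) :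
    HasSum (fun n ↦ b n * x ^ n) (x * s) := by
  have hshift : HasSum (fun n ↦ b (n + 1) * x ^ (n + 1)) (x * s) := by
    convert! h.mul_left x using 2 with n
    ring
  simpa [hb] using hshift.zero_add (f := fun n ↦ b n * x ^ n)

theorem mem_eball_zero_one_iff {E : Type*} [SeminormedAddCommGroup E] {x : E} :
    x ∈ Metric.eball (0 : E) 1 ↔ ‖x‖ < 1 := by
  rw [← ENNReal.ofReal_one, Metric.eball_ofReal, mem_ball_zero_iff]

variable {𝕜 : Type*} [NontriviallyNormedField 𝕜] {f : 𝕜 → 𝕜} {a : ℕ → 𝕜} {r : ENNReal}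

theorem hasSum_mul_pow_of_hasFPowerSeriesOnBall_ofScalars
    (h : HasFPowerSeriesOnBall f (ofScalars 𝕜 a) 0 r) {x : 𝕜} (hx : x ∈ Metric.eball 0 r) :
    HasSum (fun n ↦ a n * x ^ n) (f x) := by
  simpa only [zero_add, ofScalars_apply_eq, smul_eq_mul] using h.hasSum hx

theorem hasFPowerSeriesOnBall_deriv_ofScalars [CompleteSpace 𝕜]
    (h : HasFPowerSeriesOnBall f (ofScalars 𝕜 a) 0 r) :
    HasFPowerSeriesOnBall (deriv f) (ofScalars 𝕜 fun n ↦ (n + 1) * a (n + 1)) 0 r := by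
  convert! (ContinuousLinearMap.apply 𝕜 𝕜 (1 : 𝕜)).comp_hasFPowerSeriesOnBall h.fderiv using 1
  ext n
  simp

theorem hasSum_natCast_mul_mul_pow_of_hasFPowerSeriesOnBall_ofScalars [CompleteSpace 𝕜]
    (h : HasFPowerSeriesOnBall f (ofScalars 𝕜 a) 0 r) {x : 𝕜} (hx : x ∈ Metric.eball 0 r) :
    HasSum (fun n : ℕ ↦ n * a n * x ^ n) (x * deriv f x) :=
  hasSum_mul_pow_of_hasSum_succ (by simp) (by
    simpa using hasSum_mul_pow_of_hasFPowerSeriesOnBall_ofScalars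
      (hasFPowerSeriesOnBall_deriv_ofScalars h) hx)

end PowerSeries

section Coefficient

theorem ascPochhammer_succ_eval_left {R : Type*} [CommSemiring R] (n : ℕ) (x : R) :
    (ascPochhammer R (n + 1)).eval x = x * (ascPochhammer R n).eval (x + 1) := by
  simp [ascPochhammer_succ_left, Polynomial.eval_comp]

variable {𝕂 : Type*} [Field 𝕂] [CharZero 𝕂]

theorem succ_mul_ordinaryHypergeometricCoefficient_succ (a b c : 𝕂) (n : ℕ) :
    (n + 1) * ordinaryHypergeometricCoefficient a b c (n + 1) =
      a * b / c * ordinaryHypergeometricCoefficient (a + 1) (b + 1) (c + 1) n := by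
  have hn : (n + 1 : 𝕂) ≠ 0 := n.cast_add_one_ne_zero
  simp only [ordinaryHypergeometricCoefficient, ascPochhammer_succ_eval_left, Nat.factorial_succ,
    Nat.cast_mul, Nat.cast_succ, mul_inv]
  field_simp

theorem ordinaryHypergeometricCoefficient_recurrence (a b : 𝕂) {c : 𝕂} {n : ℕ} (hc : c + n ≠ 0) :
    (c + n) * ((n + 1) * ordinaryHypergeometricCoefficient a b c (n + 1)) =
      (a + n) * (b + n) * ordinaryHypergeometricCoefficient a b c n := by
  have hn : (n + 1 : 𝕂) ≠ 0 := n.cast_add_one_ne_zero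
  simp only [ordinaryHypergeometricCoefficient, ascPochhammer_succ_eval, Nat.factorial_succ,
    Nat.cast_mul, Nat.cast_succ, mul_inv]
  field_simp

end Coefficient

section Gauss

variable {𝕂 : Type*} [RCLike 𝕂] (a b c : 𝕂)

theorem one_le_radius_ordinaryHypergeometricSeries :
    1 ≤ (ordinaryHypergeometricSeries 𝕂 a b c).radius := by
  by_cases h : ∀ k : ℕ, (k : 𝕂) ≠ -a ∧ (k : 𝕂) ≠ -b ∧ (k : 𝕂) ≠ -c
  · exact (ordinaryHypergeometricSeries_radius_eq_one 𝕂 a b c h).ge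
  · have htop : (ordinaryHypergeometricSeries 𝕂 a b c).radius = ⊤ := by
      simp only [not_forall, not_and_or, not_not, ← neg_eq_iff_eq_neg] at h
      obtain ⟨k, rfl | rfl | rfl⟩ := h
      · exact ordinaryHypergeometric_radius_top_of_neg_nat₁ 𝕂 b c
      · exact ordinaryHypergeometric_radius_top_of_neg_nat₂ 𝕂 a c
      · exact ordinaryHypergeometric_radius_top_of_neg_nat₃ 𝕂 a b
    exact htop ▸ le_top

theorem hasFPowerSeriesOnBall_ordinaryHypergeometric :
    HasFPowerSeriesOnBall (₂F₁ a b c : 𝕂 → 𝕂)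
      (ofScalars 𝕂 (ordinaryHypergeometricCoefficient a b c)) 0 1 :=
  have hr := one_le_radius_ordinaryHypergeometricSeries a b c
  ((ordinaryHypergeometricSeries 𝕂 a b c).hasFPowerSeriesOnBall
    (one_pos.trans_le hr)).mono one_pos hr

variable {x : 𝕂}

theorem analyticAt_ordinaryHypergeometric (hx : ‖x‖ < 1) :
    AnalyticAt 𝕂 (₂F₁ a b c : 𝕂 → 𝕂) x :=
  (hasFPowerSeriesOnBall_ordinaryHypergeometric a b c).analyticAt_of_mem
    (mem_eball_zero_one_iff.2 hx)

theorem deriv_ordinaryHypergeometric (hx : ‖x‖ < 1) :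
    deriv (₂F₁ a b c) x = a * b / c * ₂F₁ (a + 1) (b + 1) (c + 1) x := by
  have hmem := mem_eball_zero_one_iff.2 hx
  have hderiv := hasSum_mul_pow_of_hasFPowerSeriesOnBall_ofScalars
    (hasFPowerSeriesOnBall_deriv_ofScalars
      (hasFPowerSeriesOnBall_ordinaryHypergeometric a b c)) hmem
  have hshift := hasSum_mul_pow_of_hasFPowerSeriesOnBall_ofScalars
    (hasFPowerSeriesOnBall_ordinaryHypergeometric (a + 1) (b + 1) (c + 1)) hmem
  refine hderiv.unique ?_
  convert! hshift.mul_left (a * b / c) using 2 with n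
  rw [succ_mul_ordinaryHypergeometricCoefficient_succ, mul_assoc]

variable {c}

theorem ordinaryHypergeometric_gauss_ode (hc : ∀ n : ℕ, c ≠ -n) (hx : ‖x‖ < 1) :
    x * (1 - x) * deriv (deriv (₂F₁ a b c)) x + (c - (a + b + 1) * x) * deriv (₂F₁ a b c) x
      - a * b * ₂F₁ a b c x = 0 := by
  have hmem := mem_eball_zero_one_iff.2 hx
  let u := ordinaryHypergeometricCoefficient a b c
  have hF := hasFPowerSeriesOnBall_ordinaryHypergeometric a b c
  have hdF := hasFPowerSeriesOnBall_deriv_ofScalars hF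
  have sum_F : HasSum (fun n ↦ u n * x ^ n) (₂F₁ a b c x) :=
    hasSum_mul_pow_of_hasFPowerSeriesOnBall_ofScalars hF hmem
  have sum_dF : HasSum (fun n : ℕ ↦ (n + 1) * u (n + 1) * x ^ n) (deriv (₂F₁ a b c) x) :=
    hasSum_mul_pow_of_hasFPowerSeriesOnBall_ofScalars hdF hmem
  have sum_xdF : HasSum (fun n : ℕ ↦ n * u n * x ^ n) (x * deriv (₂F₁ a b c) x) :=
    hasSum_natCast_mul_mul_pow_of_hasFPowerSeriesOnBall_ofScalars hF hmem
  have sum_xddF : HasSum (fun n : ℕ ↦ n * ((n + 1) * u (n + 1)) * x ^ n)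
      (x * deriv (deriv (₂F₁ a b c)) x) :=
    hasSum_natCast_mul_mul_pow_of_hasFPowerSeriesOnBall_ofScalars hdF hmem
  have sum_xxddF : HasSum (fun n : ℕ ↦ n * (n - 1) * u n * x ^ n)
      (x * (x * deriv (deriv (₂F₁ a b c)) x)) :=
    hasSum_mul_pow_of_hasSum_succ (by simp) (by
      convert! sum_xddF using 3 with n
      push_cast
      ring)
  have hsum := ((sum_xddF.sub sum_xxddF).add
    ((sum_dF.mul_left c).sub (sum_xdF.mul_left (a + b + 1)))).sub (sum_F.mul_left (a * b))
  have hzero (n : ℕ) : (n : 𝕂) * ((n + 1) * u (n + 1)) * x ^ n - n * (n - 1) * u n * x ^ n +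
      (c * ((n + 1) * u (n + 1) * x ^ n) - (a + b + 1) * (n * u n * x ^ n)) -
      a * b * (u n * x ^ n) = 0 := by
    have hcn : c + n ≠ 0 := fun h ↦ hc n (eq_neg_of_add_eq_zero_left h)
    linear_combination x ^ n * ordinaryHypergeometricCoefficient_recurrence a b hcn
  simp only [hzero] at hsum
  linear_combination hsum.unique hasSum_zero

end Gauss

section Riccati

variable {𝕜 : Type*} [NontriviallyNormedField 𝕜] {f : 𝕜 → 𝕜} {x : 𝕜}

theorem hasDerivAt_mul_logDeriv (hf : DifferentiableAt 𝕜 f x)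
    (hf' : DifferentiableAt 𝕜 (deriv f) x) (hfx : f x ≠ 0) :
    HasDerivAt (fun z ↦ z * logDeriv f z)
      (logDeriv f x + x * (deriv (deriv f) x / f x - logDeriv f x ^ 2)) x := by
  convert! (hasDerivAt_id x).mul (hf'.hasDerivAt.div hf.hasDerivAt hfx) using 1
  simp only [logDeriv_apply, id_eq, Pi.div_apply]
  field_simp

theorem riccati_of_gauss_ode {a b c : 𝕜} (hf : DifferentiableAt 𝕜 f x)
    (hf' : DifferentiableAt 𝕜 (deriv f) x) (hfx : f x ≠ 0) (hx : x ≠ 1)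
    (hode : x * (1 - x) * deriv (deriv f) x + (c - (a + b + 1) * x) * deriv f x
      - a * b * f x = 0)
    {u : 𝕜 → 𝕜} (hu : u =ᶠ[𝓝 x] fun z ↦ z * logDeriv f z + ((a + b) * z - c) / (z - 1)) :
    DifferentiableAt 𝕜 u x ∧
      x * (x - 1) * deriv u x + (x - 1) * u x ^ 2 + (1 - x * (a + b) + c) * u x
        + a * b * x - c = 0 := by
  have hx1 : x - 1 ≠ 0 := sub_ne_zero.2 hx
  have hrat : HasDerivAt (fun z ↦ ((a + b) * z - c) / (z - 1))
      (((a + b) * (x - 1) - ((a + b) * x - c)) / (x - 1) ^ 2) x := by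
    simpa using (((hasDerivAt_id x).const_mul (a + b)).sub_const c).fun_div
      ((hasDerivAt_id x).sub_const 1) hx1
  have hderiv := ((hasDerivAt_mul_logDeriv hf hf' hfx).add hrat).congr_of_eventuallyEq hu
  refine ⟨hderiv.differentiableAt, ?_⟩
  rw [hderiv.deriv, hu.eq_of_nhds, logDeriv_apply]
  field_simp
  linear_combination (-x * (x - 1) * f x) * hode

end Riccati

theorem hypF_eq_ordinaryHypergeometric (α β γ : ℂ) : hypF α β γ = ₂F₁ α β γ := by
  rw [ordinaryHypergeometric_eq_tsum]
  funext c
  refine tsum_congr fun k ↦ ?_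
  rw [smul_eq_mul]
  field_simp

/-- The initial condition `x₀(c) = (αβc/γ)·₂F₁(α+1,β+1;γ+1;c)/₂F₁(α,β;γ;c)
+ ((α+β)c − γ)/(c−1)` for the hypergeometric weight satisfies the Riccati equation
`c(c−1)x₀' + (c−1)x₀² + (1 − c(α+β) + γ)x₀ + αβc − γ = 0`. -/
theorem stmt_11 (α β γ : ℂ) (hγ : ∀ m : ℕ, γ ≠ -(m : ℂ))
    (x₀ : ℂ → ℂ)
    (hx₀ : ∀ c : ℂ, x₀ c =
      (α * β * c / γ) * hypF (α + 1) (β + 1) (γ + 1) c / hypF α β γ c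
        + ((α + β) * c - γ) / (c - 1)) :
    ∀ c : ℂ, ‖c‖ < 1 → c ≠ 0 → c ≠ 1 → hypF α β γ c ≠ 0 →
      DifferentiableAt ℂ x₀ c ∧
      c * (c - 1) * deriv x₀ c + (c - 1) * (x₀ c) ^ 2
        + (1 - c * (α + β) + γ) * x₀ c + α * β * c - γ = 0 := by
  intro c hc _ hc1 hF
  simp only [hypF_eq_ordinaryHypergeometric] at hx₀ hF
  have hanalytic := analyticAt_ordinaryHypergeometric α β γ hc
  refine riccati_of_gauss_ode hanalytic.differentiableAt hanalytic.deriv.differentiableAt hF hc1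
    (ordinaryHypergeometric_gauss_ode α β hγ hc) ?_
  filter_upwards [continuous_norm.continuousAt.eventually_lt_const hc] with z hz
  rw [hx₀, logDeriv_apply, deriv_ordinaryHypergeometric α β γ hz]
  ring
end

section
/- Let α, β, γ, n ∈ ℂ. Suppose f is a twice differentiable complex function of t on an open set with t ∉ {0,1} and f(t) ∉ {0, 1, t}, satisfying the sixth Painlevé equation with parameters A = (α−1)²/2, B = −(β−γ)²/2, C = (n+β)²/2, D = 1/2 − (n+α−γ)²/2. Define h(c) = (c·f(1/c) − 1)/(f(1/c) − 1) for c with c ∉ {0,1}, f(1/c) ≠ 1 and h(c) ∉ {0, 1, c}. Then h satisfies the sixth Painlevé equation in the independent variable c with parameters A = (n+β)²/2, B = −(n+α−γ)²/2, C = (β−γ)²/2, D = −(α−2)α/2. -/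
/-!
The transformation `f ↦ h` is the composite of two classical symmetries of the sixth Painlevé
equation. The first, `g(c) = c f(1/c)`, fixes the singular values `0, ∞` and sends `1, 1/c` to
`c, 1`, so it acts on the parameters by `(A, B, C, D) ↦ (A, B, 1/2 - D, 1/2 - C)`. The second,
`h = c (g - 1) / (g - c)`, keeps the independent variable and swaps `0 ↔ 1` and `c ↔ ∞`, so it acts
by `(A, B, C, D) ↦ (1/2 - D, -C, -B, 1/2 - A)`.
-/

open Filter Topology

/-- `f` solves the sixth Painlevé equation with parameters `A, B, C, D` at the point `t`: neither
`t` nor `f t` is singular for the equation, `f` is differentiable near `t`, and its second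
derivative exists at `t` and has the prescribed value. -/
structure IsP6SolutionAt (A B C D : ℂ) (f : ℂ → ℂ) (t : ℂ) : Prop where
  var_ne_zero : t ≠ 0
  var_ne_one : t ≠ 1
  ne_zero : f t ≠ 0
  ne_one : f t ≠ 1
  ne_var : f t ≠ t
  eventually_differentiableAt : ∀ᶠ s in 𝓝 t, DifferentiableAt ℂ f s
  hasDerivAt_deriv : HasDerivAt (deriv f) (P6RHS A B C D t (f t) (deriv f t)) t

-- If `f` has value `y` and derivative `p` at `t⁻¹`, then `s ↦ s * f s⁻¹` has value `t * y` and
-- derivative `y - p / t` at `t`; the right-hand side is its second derivative.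
theorem P6RHS_mul_inv (A B C D : ℂ) {t y : ℂ} (p : ℂ) (ht₀ : t ≠ 0) (ht₁ : t ≠ 1) (hy₀ : y ≠ 0)
    (hy₁ : y ≠ 1) (hyt : t * y ≠ 1) :
    P6RHS A B (1 / 2 - D) (1 / 2 - C) t (t * y) (y - p / t) = P6RHS A B C D t⁻¹ y p / t ^ 3 := by
  have ht₁' : t - 1 ≠ 0 := sub_ne_zero.2 ht₁
  have hy₁' : y - 1 ≠ 0 := sub_ne_zero.2 hy₁
  have hyt' : t * y - 1 ≠ 0 := sub_ne_zero.2 hyt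
  have value_sub_var : t * y - t = t * (y - 1) := by ring
  have value_sub_inv : y - t⁻¹ = (t * y - 1) / t := by field_simp
  have inv_sub_one : t⁻¹ - 1 = -(t - 1) / t := by field_simp; ring
  unfold P6RHS
  rw [value_sub_var, value_sub_inv, inv_sub_one]
  field_simp
  ring

-- If `g` has value `y` and derivative `p` at `t`, then the last two arguments on the left are the
-- value and the derivative of `s ↦ s * (g s - 1) / (g s - s)` at `t`; the right-hand side is its
-- second derivative.
theorem P6RHS_mul_sub_one_div_sub (A B C D : ℂ) {t y : ℂ} (p : ℂ) (ht₀ : t ≠ 0) (ht₁ : t ≠ 1)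
    (hy₀ : y ≠ 0) (hy₁ : y ≠ 1) (hyt : y ≠ t) :
    P6RHS (1 / 2 - D) (-C) (-B) (1 / 2 - A) t (t * (y - 1) / (y - t))
        ((y * (y - 1) - t * (t - 1) * p) / (y - t) ^ 2) =
      (2 * (y - t) ^ 2 * p - t * (t - 1) * (y - t) * P6RHS A B C D t y p
        - 2 * (p - 1) * (y * (y - 1) - t * (t - 1) * p)) / (y - t) ^ 3 := by
  have ht₁' : t - 1 ≠ 0 := sub_ne_zero.2 ht₁
  have hy₁' : y - 1 ≠ 0 := sub_ne_zero.2 hy₁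
  have hyt' : y - t ≠ 0 := sub_ne_zero.2 hyt
  have value_sub_one : t * (y - 1) / (y - t) - 1 = (t - 1) * y / (y - t) := by field_simp; ring
  have value_sub_var : t * (y - 1) / (y - t) - t = t * (t - 1) / (y - t) := by field_simp; ring
  unfold P6RHS
  rw [value_sub_one, value_sub_var]
  field_simp
  ring

section Derivatives

variable {𝕜 : Type*} [NontriviallyNormedField 𝕜]

theorem hasDerivAt_mul_comp_inv {f : 𝕜 → 𝕜} {f' s : 𝕜} (hs : s ≠ 0)
    (hf : HasDerivAt f f' s⁻¹) :
    HasDerivAt (fun x ↦ x * f x⁻¹) (f s⁻¹ - f' / s) s := by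
  have hcomp : HasDerivAt (fun x ↦ f x⁻¹) (f' * -(s ^ 2)⁻¹) s := hf.comp s (hasDerivAt_inv hs)
  refine ((hasDerivAt_id' s).mul hcomp).congr_deriv ?_
  field_simp
  ring

theorem hasDerivAt_comp_inv_sub_comp_inv_div {f f' : 𝕜 → 𝕜} {f'' s : 𝕜} (hs : s ≠ 0)
    (hf : HasDerivAt f (f' s⁻¹) s⁻¹) (hf' : HasDerivAt f' f'' s⁻¹) :
    HasDerivAt (fun x ↦ f x⁻¹ - f' x⁻¹ / x) (f'' / s ^ 3) s := by
  have hcomp : HasDerivAt (fun x ↦ f x⁻¹) (f' s⁻¹ * -(s ^ 2)⁻¹) s :=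
    hf.comp s (hasDerivAt_inv hs)
  have hcomp' : HasDerivAt (fun x ↦ f' x⁻¹) (f'' * -(s ^ 2)⁻¹) s := hf'.comp s (hasDerivAt_inv hs)
  refine (hcomp.sub (hcomp'.div (hasDerivAt_id' s) hs)).congr_deriv ?_
  field_simp
  ring

theorem hasDerivAt_mul_sub_one_div_sub {g : 𝕜 → 𝕜} {g' s : 𝕜} (hgs : g s ≠ s)
    (hg : HasDerivAt g g' s) :
    HasDerivAt (fun x ↦ x * (g x - 1) / (g x - x))
      ((g s * (g s - 1) - s * (s - 1) * g') / (g s - s) ^ 2) s := by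
  have hid := hasDerivAt_id' s
  refine ((hid.mul (hg.sub_const 1)).div (hg.sub hid) (sub_ne_zero.2 hgs)).congr_deriv ?_
  simp only [Pi.mul_apply, Pi.sub_apply]
  ring

theorem hasDerivAt_deriv_mul_sub_one_div_sub {g g' : 𝕜 → 𝕜} {g'' s : 𝕜} (hgs : g s ≠ s)
    (hg : HasDerivAt g (g' s) s) (hg' : HasDerivAt g' g'' s) :
    HasDerivAt (fun x ↦ (g x * (g x - 1) - x * (x - 1) * g' x) / (g x - x) ^ 2)
      ((2 * (g s - s) ^ 2 * g' s - s * (s - 1) * (g s - s) * g''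
        - 2 * (g' s - 1) * (g s * (g s - 1) - s * (s - 1) * g' s)) / (g s - s) ^ 3) s := by
  have hgs' : g s - s ≠ 0 := sub_ne_zero.2 hgs
  have hid := hasDerivAt_id' s
  have hnum := (hg.mul (hg.sub_const 1)).sub ((hid.mul (hid.sub_const 1)).mul hg')
  refine (hnum.div ((hg.sub hid).pow 2) (pow_ne_zero 2 hgs')).congr_deriv ?_
  simp only [Pi.mul_apply, Pi.sub_apply, Pi.pow_apply]
  field_simp
  ring

end Derivatives

namespace IsP6SolutionAt

variable {A B C D t : ℂ} {f g : ℂ → ℂ}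

theorem of_hasDerivAt {f' : ℂ → ℂ} (ht₀ : t ≠ 0) (ht₁ : t ≠ 1) (hf₀ : f t ≠ 0) (hf₁ : f t ≠ 1)
    (hft : f t ≠ t) (hf : ∀ᶠ s in 𝓝 t, HasDerivAt f (f' s) s)
    (hf' : HasDerivAt f' (P6RHS A B C D t (f t) (f' t)) t) : IsP6SolutionAt A B C D f t where
  var_ne_zero := ht₀
  var_ne_one := ht₁
  ne_zero := hf₀
  ne_one := hf₁
  ne_var := hft
  eventually_differentiableAt := hf.mono fun _ hs ↦ hs.differentiableAt
  hasDerivAt_deriv := by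
    rw [hf.self_of_nhds.deriv]
    exact hf'.congr_of_eventuallyEq (hf.mono fun _ hs ↦ hs.deriv)

theorem differentiableAt (hf : IsP6SolutionAt A B C D f t) : DifferentiableAt ℂ f t :=
  hf.eventually_differentiableAt.self_of_nhds

theorem congr_of_eventuallyEq (hf : IsP6SolutionAt A B C D f t) (hgf : g =ᶠ[𝓝 t] f) :
    IsP6SolutionAt A B C D g t := by
  have hval : g t = f t := hgf.self_of_nhds
  refine of_hasDerivAt (f' := deriv f) hf.var_ne_zero hf.var_ne_one (hval ▸ hf.ne_zero)
    (hval ▸ hf.ne_one) (hval ▸ hf.ne_var) ?_ (hval ▸ hf.hasDerivAt_deriv)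
  filter_upwards [hf.eventually_differentiableAt, hgf.eventuallyEq_nhds] with s hs hgfs
  exact hs.hasDerivAt.congr_of_eventuallyEq hgfs

theorem mul_comp_inv (hf : IsP6SolutionAt A B C D f t⁻¹) :
    IsP6SolutionAt A B (1 / 2 - D) (1 / 2 - C) (fun s ↦ s * f s⁻¹) t := by
  have ht₀ : t ≠ 0 := fun h ↦ hf.var_ne_zero (inv_eq_zero.2 h)
  have ht₁ : t ≠ 1 := fun h ↦ hf.var_ne_one (inv_eq_one.2 h)
  have hft : t * f t⁻¹ ≠ 1 := fun h ↦ hf.ne_var (eq_inv_of_mul_eq_one_right h)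
  refine of_hasDerivAt (f' := fun s ↦ f s⁻¹ - deriv f s⁻¹ / s) ht₀ ht₁
    (mul_ne_zero ht₀ hf.ne_zero) hft (fun h ↦ hf.ne_one (mul_left_cancel₀ ht₀ (by simpa using h)))
    ?_ ?_
  · filter_upwards [(continuousAt_inv₀ ht₀).eventually hf.eventually_differentiableAt,
      eventually_ne_nhds ht₀] with s hs hs₀
    exact hasDerivAt_mul_comp_inv hs₀ hs.hasDerivAt
  · rw [P6RHS_mul_inv A B C D _ ht₀ ht₁ hf.ne_zero hf.ne_one hft]
    exact hasDerivAt_comp_inv_sub_comp_inv_div ht₀ hf.differentiableAt.hasDerivAt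
      hf.hasDerivAt_deriv

theorem mul_sub_one_div_sub (hg : IsP6SolutionAt A B C D g t) :
    IsP6SolutionAt (1 / 2 - D) (-C) (-B) (1 / 2 - A) (fun s ↦ s * (g s - 1) / (g s - s)) t := by
  obtain ⟨ht₀, ht₁, hg₀, hg₁, hgt, hdiff, hderiv⟩ := hg
  have hgt' : g t - t ≠ 0 := sub_ne_zero.2 hgt
  have hvalue_ne_one : t * (g t - 1) / (g t - t) ≠ 1 := fun h ↦
    mul_ne_zero (sub_ne_zero.2 ht₁) hg₀ (by linear_combination (div_eq_iff hgt').1 h)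
  have hvalue_ne_var : t * (g t - 1) / (g t - t) ≠ t := fun h ↦
    mul_ne_zero ht₀ (sub_ne_zero.2 ht₁) (by linear_combination (div_eq_iff hgt').1 h)
  refine of_hasDerivAt
    (f' := fun s ↦ (g s * (g s - 1) - s * (s - 1) * deriv g s) / (g s - s) ^ 2) ht₀ ht₁
    (div_ne_zero (mul_ne_zero ht₀ (sub_ne_zero.2 hg₁)) hgt') hvalue_ne_one hvalue_ne_var ?_ ?_
  · have hne : ∀ᶠ s in 𝓝 t, g s ≠ s :=
      hdiff.self_of_nhds.continuousAt.ne_iff_eventually_ne continuousAt_id |>.1 hgt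
    filter_upwards [hdiff, hne] with s hs hgs
    exact hasDerivAt_mul_sub_one_div_sub hgs hs.hasDerivAt
  · rw [P6RHS_mul_sub_one_div_sub A B C D _ ht₀ ht₁ hg₀ hg₁ hgt]
    exact hasDerivAt_deriv_mul_sub_one_div_sub hgt hdiff.self_of_nhds.hasDerivAt hderiv

theorem mul_comp_inv_sub_one_div (hf : IsP6SolutionAt A B C D f t⁻¹) :
    IsP6SolutionAt C (D - 1 / 2) (-B) (1 / 2 - A)
      (fun s ↦ (s * f s⁻¹ - 1) / (f s⁻¹ - 1)) t := by
  have hcomposite := hf.mul_comp_inv.mul_sub_one_div_sub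
  rw [sub_sub_cancel, neg_sub] at hcomposite
  refine hcomposite.congr_of_eventuallyEq ?_
  filter_upwards [eventually_ne_nhds hcomposite.var_ne_zero] with s hs
  rw [← mul_div_mul_left _ _ hs, mul_sub_one s (f s⁻¹)]

end IsP6SolutionAt

/-- If `f` satisfies the sixth Painlevé equation with parameters
`A = (α−1)²/2`, `B = −(β−γ)²/2`, `C = (n+β)²/2`, `D = 1/2 − (n+α−γ)²/2`, then
`h(c) = (c·f(1/c) − 1)/(f(1/c) − 1)` satisfies the sixth Painlevé equation in `c`
with parameters `A = (n+β)²/2`, `B = −(n+α−γ)²/2`, `C = (β−γ)²/2`, `D = −(α−2)α/2`. -/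
theorem stmt_12 (α β γ n : ℂ) (U : Set ℂ) (hU : IsOpen U)
    (f f' : ℂ → ℂ)
    (ht0 : ∀ t ∈ U, t ≠ 0) (ht1 : ∀ t ∈ U, t ≠ 1)
    (hf0 : ∀ t ∈ U, f t ≠ 0) (hf1 : ∀ t ∈ U, f t ≠ 1) (hft : ∀ t ∈ U, f t ≠ t)
    (hd1 : ∀ t ∈ U, HasDerivAt f (f' t) t)
    (hd2 : ∀ t ∈ U, HasDerivAt f'
      (P6RHS ((α - 1) ^ 2 / 2) (-(β - γ) ^ 2 / 2) ((n + β) ^ 2 / 2)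
        (1 / 2 - (n + α - γ) ^ 2 / 2) t (f t) (f' t)) t)
    (h : ℂ → ℂ)
    (hh : ∀ c : ℂ, h c = (c * f c⁻¹ - 1) / (f c⁻¹ - 1)) :
    ∀ c : ℂ, c ≠ 0 → c ≠ 1 → c⁻¹ ∈ U → f c⁻¹ ≠ 1 →
      h c ≠ 0 → h c ≠ 1 → h c ≠ c →
      DifferentiableAt ℂ h c ∧
      HasDerivAt (deriv h)
        (P6RHS ((n + β) ^ 2 / 2) (-(n + α - γ) ^ 2 / 2) ((β - γ) ^ 2 / 2)
          (-(α - 2) * α / 2) c (h c) (deriv h c)) c := by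
  intro c _ _ hcU _ _ _ _
  have hf := IsP6SolutionAt.of_hasDerivAt (ht0 _ hcU) (ht1 _ hcU) (hf0 _ hcU) (hf1 _ hcU)
    (hft _ hcU) (eventually_of_mem (hU.mem_nhds hcU) hd1) (hd2 _ hcU)
  have hsol := hf.mul_comp_inv_sub_one_div
  rw [← funext hh] at hsol
  refine ⟨hsol.differentiableAt, ?_⟩
  convert hsol.hasDerivAt_deriv using 2 <;> ring
end

section
/- Let α, β, γ, n ∈ ℂ and c₀ ∈ ℂ ∖ {0, 1}. Suppose x, y are differentiable complex functions on a neighbourhood of c₀ satisfying the cleared-denominator form of the hypergeometric-weight differential system, Q(x(c), y(c), c)·x'(c) = P₁(x(c), y(c), c), for all c in that neighbourhood. If the point (x(c₀), y(c₀)) lies on the curve Γ defined by αβ − (n+α+β)x + x² − y = 0, then (x(c₀) − 1)(x(c₀) − α)(x(c₀) − β)(x(c₀) − γ) = 0; indeed, the polynomial identity P₁(x, x² − (n+α+β)x + αβ, c) = (x−1)(x−α)(x−β)(x−γ) holds for all x and c. In particular, no such solution passes through the extra indeterminacy point x = (n+α+β)/2, y = −(n² + 2n(α+β) + (α−β)²)/4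 on Γ unless (n+α+β)/2 ∈ {1, α, β, γ}. -/
/-!
`P₁` is affine in `c`, and its `c`-coefficient is minus the square of the polynomial `g` defining
`Γ`: `P₁ = (x - 1)(x - α)(x - β)(x - γ) - c g²`, while `Q = c (c - 1) g`. Hence both `Q x'` and
`c g²` vanish where a solution meets `Γ`, and the quartic must vanish there too.
-/

/-- The polynomial whose zero locus is the curve `Γ`, with the sign for which
`Q = c (c - 1) * gammaPoly`. -/
noncomputable def gammaPoly (α β n x y : ℂ) : ℂ :=
  α * β - (n + α + β) * x + x ^ 2 - y

section

variable {α β γ n x y c : ℂ}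

theorem P1_eq_prod_sub_mul_gammaPoly_sq :
    P1 α β γ n x y c =
      (x - 1) * (x - α) * (x - β) * (x - γ) - c * gammaPoly α β n x y ^ 2 := by
  unfold P1 gammaPoly
  ring

theorem P1_eq_prod_of_gammaPoly_eq_zero (hΓ : gammaPoly α β n x y = 0) :
    P1 α β γ n x y c = (x - 1) * (x - α) * (x - β) * (x - γ) := by
  rw [P1_eq_prod_sub_mul_gammaPoly_sq, hΓ]
  ring

theorem Qd_eq_zero_of_gammaPoly_eq_zero (hΓ : gammaPoly α β n x y = 0) :
    Qd α β γ n x y c = 0 :=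
  mul_eq_zero_of_right (c * (c - 1)) hΓ

theorem prod_eq_zero_of_Qd_mul_eq_P1 {v : ℂ} (hΓ : gammaPoly α β n x y = 0)
    (hv : Qd α β γ n x y c * v = P1 α β γ n x y c) :
    (x - 1) * (x - α) * (x - β) * (x - γ) = 0 :=
  calc
    (x - 1) * (x - α) * (x - β) * (x - γ) = P1 α β γ n x y c :=
      (P1_eq_prod_of_gammaPoly_eq_zero hΓ).symm
    _ = Qd α β γ n x y c * v := hv.symm
    _ = 0 := mul_eq_zero_of_left (Qd_eq_zero_of_gammaPoly_eq_zero hΓ) v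

theorem gammaPoly_graph_eq_zero : gammaPoly α β n x (x ^ 2 - (n + α + β) * x + α * β) = 0 := by
  unfold gammaPoly
  ring

end

/-- Solutions of the cleared-denominator hypergeometric-weight system meeting the
curve `Γ : αβ − (n+α+β)x + x² − y = 0` must do so at `x ∈ {1, α, β, γ}`; indeed
`P₁(x, x² − (n+α+β)x + αβ, c) = (x−1)(x−α)(x−β)(x−γ)` identically.  In particular no
such solution passes through the extra indeterminacy point `q₉` on `Γ` unless
`(n+α+β)/2 ∈ {1, α, β, γ}`. -/
theorem stmt_15 (α β γ n : ℂ) (c₀ : ℂ) (hc0 : c₀ ≠ 0) (hc1 : c₀ ≠ 1)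
    (V : Set ℂ) (hV : IsOpen V) (hc₀V : c₀ ∈ V)
    (x y dx : ℂ → ℂ)
    (hx : ∀ c ∈ V, HasDerivAt x (dx c) c)
    (hsys : ∀ c ∈ V, Qd α β γ n (x c) (y c) c * dx c = P1 α β γ n (x c) (y c) c)
    (hΓ : α * β - (n + α + β) * x c₀ + (x c₀) ^ 2 - y c₀ = 0) :
    ((x c₀ - 1) * (x c₀ - α) * (x c₀ - β) * (x c₀ - γ) = 0) ∧
    (∀ X C : ℂ, P1 α β γ n X (X ^ 2 - (n + α + β) * X + α * β) C
      = (X - 1) * (X - α) * (X - β) * (X - γ)) ∧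
    (x c₀ = (n + α + β) / 2 →
      y c₀ = -(n ^ 2 + 2 * n * (α + β) + (α - β) ^ 2) / 4 →
      ((n + α + β) / 2 = 1 ∨ (n + α + β) / 2 = α ∨
        (n + α + β) / 2 = β ∨ (n + α + β) / 2 = γ)) := by
  have quartic_eq_zero : (x c₀ - 1) * (x c₀ - α) * (x c₀ - β) * (x c₀ - γ) = 0 :=
    prod_eq_zero_of_Qd_mul_eq_P1 hΓ (hsys c₀ hc₀V)
  refine ⟨quartic_eq_zero, fun _ _ => P1_eq_prod_of_gammaPoly_eq_zero gammaPoly_graph_eq_zero, ?_⟩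
  intro x_eq _
  simpa only [x_eq, mul_eq_zero, sub_eq_zero, or_assoc] using quartic_eq_zero
end

section
/- Let α, N, c ∈ ℂ with c ≠ 0 and N ≠ 0, let n ∈ ℂ, and let A, A₊, B, B₋, x, x₋, y, y₊ be complex numbers related by B = (c−1+x)/(2c), B₋ = (c−1+x₋)/(2c), A = (n + N·y)/(2Nc), A₊ = (n + 1 + N·y₊)/(2Nc), with n + N·y ≠ 0. Then the pair of equations 2c(A₊ + A) + 2c·B² + (1−c)·B = (2n+α+1)/N and A·(2c·B + 1 − c)·(2c·B₋ + 1 − c) = (2c·A − n/N)·(2c·A − (n+α)/N) holds if and only if the pair of equations x·x₋ = 2Nc·y(y − α/N)/(n + N·y) and 2(y₊ + y) = 2α/N − (x² + (c−1)x)/c holds. -/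
/-!
The substitution is affine with inverse `x = 2cB + 1 - c`, `y = 2cA - n/N`. Every factor of the
multiplicative equation other than `A` is therefore a new variable or a shift of one, and `A` is
divided out. In the additive equation the quadratic part factors as `B (2cB + 1 - c) = B x`, and the
terms `n/N` and `(n + 1)/N` cancel against the right-hand side.
-/

section ChangeOfVariables

variable {K : Type*} [Field K]

/-- The recurrence coefficient `b_n` of the semi-classical Laguerre weight as a function of the new
variable `x = x_n`. -/
def bCoeff (c x : K) : K := (c - 1 + x) / (2 * c)

/-- The squared recurrence coefficient `a_n²` of the semi-classical Laguerre weight as a function of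
the new variable `y = y_n`. The index `n` may be any element of `K`, and `a_{n+1}²` is obtained by
passing `n + 1`. -/
def aSqCoeff (N c n y : K) : K := (n + N * y) / (2 * N * c)

variable [NeZero (2 : K)] {N c : K}

theorem two_mul_mul_bCoeff_add_one_sub (hc : c ≠ 0) (x : K) :
    2 * c * bCoeff c x + 1 - c = x := by
  rw [bCoeff, mul_div_cancel₀ _ (mul_ne_zero two_ne_zero hc)]
  ring

theorem two_mul_mul_aSqCoeff (hc : c ≠ 0) (hN : N ≠ 0) (n y : K) :
    2 * c * aSqCoeff N c n y = n / N + y := by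
  rw [aSqCoeff]
  field_simp

theorem bCoeff_quadratic_eq (hc : c ≠ 0) (x : K) :
    2 * c * bCoeff c x ^ 2 + (1 - c) * bCoeff c x = (x ^ 2 + (c - 1) * x) / c / 2 :=
  calc
    2 * c * bCoeff c x ^ 2 + (1 - c) * bCoeff c x
        = bCoeff c x * (2 * c * bCoeff c x + 1 - c) := by ring
    _ = bCoeff c x * x := by rw [two_mul_mul_bCoeff_add_one_sub hc]
    _ = (x ^ 2 + (c - 1) * x) / c / 2 := by
      rw [bCoeff]
      field_simp
      ring

theorem additive_equation_iff (hc : c ≠ 0) (hN : N ≠ 0) (α n x y yp : K) :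
    2 * c * (aSqCoeff N c (n + 1) yp + aSqCoeff N c n y) + 2 * c * bCoeff c x ^ 2
        + (1 - c) * bCoeff c x = (2 * n + α + 1) / N ↔
      2 * (yp + y) = 2 * α / N - (x ^ 2 + (c - 1) * x) / c := by
  rw [add_assoc, bCoeff_quadratic_eq hc, mul_add, two_mul_mul_aSqCoeff hc hN,
    two_mul_mul_aSqCoeff hc hN]
  generalize (x ^ 2 + (c - 1) * x) / c = q
  have half_two : (2 : K) * (q / 2) = q := mul_div_cancel₀ q two_ne_zero
  rw [← mul_right_inj' (two_ne_zero (α := K))]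
  constructor <;> intro h
  · linear_combination h - half_two
  · linear_combination h + half_two

theorem multiplicative_equation_iff (hc : c ≠ 0) (hN : N ≠ 0) {n y : K}
    (hny : n + N * y ≠ 0) (α x xm : K) :
    aSqCoeff N c n y * (2 * c * bCoeff c x + 1 - c) * (2 * c * bCoeff c xm + 1 - c)
        = (2 * c * aSqCoeff N c n y - n / N) * (2 * c * aSqCoeff N c n y - (n + α) / N) ↔
      x * xm = 2 * N * c * y * (y - α / N) / (n + N * y) := by
  have first_factor : 2 * c * aSqCoeff N c n y - n / N = y := by
    rw [two_mul_mul_aSqCoeff hc hN, add_sub_cancel_left]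
  have second_factor : 2 * c * aSqCoeff N c n y - (n + α) / N = y - α / N := by
    rw [add_div, ← sub_sub, first_factor]
  have two_N_c_ne_zero : 2 * N * c ≠ 0 := mul_ne_zero (mul_ne_zero two_ne_zero hN) hc
  rw [first_factor, second_factor, two_mul_mul_bCoeff_add_one_sub hc,
    two_mul_mul_bCoeff_add_one_sub hc, aSqCoeff, mul_assoc, div_mul_eq_mul_div,
    div_eq_iff two_N_c_ne_zero, eq_div_iff hny, mul_comm (n + N * y),
    show y * (y - α / N) * (2 * N * c) = 2 * N * c * y * (y - α / N) by ring]

theorem stmt_16_general (α N c n : K) (hc : c ≠ 0) (hN : N ≠ 0)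
    (A Ap B Bm x xm y yp : K)
    (hB : B = (c - 1 + x) / (2 * c))
    (hBm : Bm = (c - 1 + xm) / (2 * c))
    (hA : A = (n + N * y) / (2 * N * c))
    (hAp : Ap = (n + 1 + N * yp) / (2 * N * c))
    (hny : n + N * y ≠ 0) :
    (2 * c * (Ap + A) + 2 * c * B ^ 2 + (1 - c) * B = (2 * n + α + 1) / N ∧
      A * (2 * c * B + 1 - c) * (2 * c * Bm + 1 - c)
        = (2 * c * A - n / N) * (2 * c * A - (n + α) / N)) ↔
    (x * xm = 2 * N * c * y * (y - α / N) / (n + N * y) ∧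
      2 * (yp + y) = 2 * α / N - (x ^ 2 + (c - 1) * x) / c) := by
  subst hB hBm hA hAp
  rw [and_comm]
  exact and_congr (multiplicative_equation_iff hc hN hny α x xm)
    (additive_equation_iff hc hN α n x y yp)

end ChangeOfVariables

/-- The change of variables `b_n = (c−1+x_n)/(2c)`, `a_n² = (n+N·y_n)/(2Nc)` turns the
discrete system for the recurrence coefficients of the semi-classical Laguerre weight
into the discrete system for `(x_n, y_n)`, and vice versa. Here `A, A₊` play the role
of `a_n², a_{n+1}²` and `B, B₋` the role of `b_n, b_{n−1}`. -/
theorem stmt_16 (α N c n : ℂ) (hc : c ≠ 0) (hN : N ≠ 0)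
    (A Ap B Bm x xm y yp : ℂ)
    (hB : B = (c - 1 + x) / (2 * c))
    (hBm : Bm = (c - 1 + xm) / (2 * c))
    (hA : A = (n + N * y) / (2 * N * c))
    (hAp : Ap = (n + 1 + N * yp) / (2 * N * c))
    (hny : n + N * y ≠ 0) :
    (2 * c * (Ap + A) + 2 * c * B ^ 2 + (1 - c) * B = (2 * n + α + 1) / N ∧
      A * (2 * c * B + 1 - c) * (2 * c * Bm + 1 - c)
        = (2 * c * A - n / N) * (2 * c * A - (n + α) / N)) ↔
    (x * xm = 2 * N * c * y * (y - α / N) / (n + N * y) ∧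
      2 * (yp + y) = 2 * α / N - (x ^ 2 + (c - 1) * x) / c) := by
  exact stmt_16_general α N c n hc hN A Ap B Bm x xm y yp hB hBm hA hAp hny
end

section
/- Let α, β, γ, n, c ∈ ℂ with c ∉ {0, 1}, and let A, S, x₋, x, y be complex numbers satisfying A·(1−c)/c = y + S + n(n+α+β−γ−1)/(1−c) and ((1−c)²/c²)·A·x·x₋ = y·(y − αβ + γ/c) + (αβ − y)·((1−c)/c)·S. If αβ − x₋·x − y ≠ 0, then A = (n·αβ·c·(n+α+β−γ−1) − c·(n² + n(α+β−γ−1) − αβ + γ)·y − c·y²)/((c−1)²·(αβ − x₋·x − y)). -/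
/-!
Put `p = αβ` and `q = n(n + α + β - γ - 1)`. The linear relation determines `(1 - c)/c · S`,
which is how `S` enters the quadratic relation. After substitution the latter is linear in `A`, with
coefficient `(1 - c)²/c² · (p - x₋x - y)`, and its constant term collapses to
`((p - y)(q + y) - γy)/c` because `(1 - c)/c + 1 = 1/c`.
-/

section Elimination

variable {K : Type*} [Field K]

theorem scaled_partialSum_eq {c A S y q : K} (hc0 : c ≠ 0) (hc1 : c ≠ 1)
    (hlin : A * (1 - c) / c = y + S + q / (1 - c)) :
    (1 - c) / c * S = (1 - c) ^ 2 / c ^ 2 * A - (1 - c) / c * y - q / c := by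
  have hc : 1 - c ≠ 0 := sub_ne_zero.mpr hc1.symm
  calc (1 - c) / c * S
      = (1 - c) / c * (A * (1 - c) / c - y - q / (1 - c)) := by rw [hlin]; ring
    _ = (1 - c) ^ 2 / c ^ 2 * A - (1 - c) / c * y - q / c := by field_simp

theorem scaled_recurrenceCoeff_mul_eq {p q γ c A S xm x y : K} (hc0 : c ≠ 0) (hc1 : c ≠ 1)
    (hlin : A * (1 - c) / c = y + S + q / (1 - c))
    (hquad : (1 - c) ^ 2 / c ^ 2 * A * x * xm
      = y * (y - p + γ / c) + (p - y) * ((1 - c) / c) * S) :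
    (1 - c) ^ 2 / c ^ 2 * A * (p - xm * x - y) = ((p - y) * (q + y) - γ * y) / c := by
  have hS := scaled_partialSum_eq hc0 hc1 hlin
  calc (1 - c) ^ 2 / c ^ 2 * A * (p - xm * x - y)
      = (p - y) * ((1 - c) / c * y + q / c) - y * (y - p + γ / c) := by
        linear_combination -hquad - (p - y) * hS
    _ = ((p - y) * (q + y) - γ * y) / c := by field_simp; ring

theorem stmt_17_general (α β γ n c : K) (hc0 : c ≠ 0) (hc1 : c ≠ 1)
    (A S xm x y : K)
    (h1 : A * (1 - c) / c = y + S + n * (n + α + β - γ - 1) / (1 - c))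
    (h2 : (1 - c) ^ 2 / c ^ 2 * A * x * xm
      = y * (y - α * β + γ / c) + (α * β - y) * ((1 - c) / c) * S)
    (hne : α * β - xm * x - y ≠ 0) :
    A = (n * α * β * c * (n + α + β - γ - 1)
        - c * (n ^ 2 + n * (α + β - γ - 1) - α * β + γ) * y - c * y ^ 2)
      / ((c - 1) ^ 2 * (α * β - xm * x - y)) := by
  have hA := scaled_recurrenceCoeff_mul_eq hc0 hc1 h1 h2
  have hc : c - 1 ≠ 0 := sub_ne_zero.mpr hc1
  rw [eq_div_iff (mul_ne_zero (pow_ne_zero 2 hc) hne)]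
  calc A * ((c - 1) ^ 2 * (α * β - xm * x - y))
      = c ^ 2 * ((1 - c) ^ 2 / c ^ 2 * A * (α * β - xm * x - y)) := by field_simp; ring
    _ = c * ((α * β - y) * (n * (n + α + β - γ - 1) + y) - γ * y) := by rw [hA]; field_simp
    _ = n * α * β * c * (n + α + β - γ - 1)
        - c * (n ^ 2 + n * (α + β - γ - 1) - α * β + γ) * y - c * y ^ 2 := by ring

end Elimination

/-- From the relations (2.1) and (2.5) for the recurrence coefficient `A = a_n²` of
the orthonormal polynomials with hypergeometric weight (with `S = x₀ + ⋯ + x_{n−1}`),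
one obtains the alternative expression (2.6) for `A`. -/
theorem stmt_17 (α β γ n c : ℂ) (hc0 : c ≠ 0) (hc1 : c ≠ 1)
    (A S xm x y : ℂ)
    (h1 : A * (1 - c) / c = y + S + n * (n + α + β - γ - 1) / (1 - c))
    (h2 : (1 - c) ^ 2 / c ^ 2 * A * x * xm
      = y * (y - α * β + γ / c) + (α * β - y) * ((1 - c) / c) * S)
    (hne : α * β - xm * x - y ≠ 0) :
    A = (n * α * β * c * (n + α + β - γ - 1)
        - c * (n ^ 2 + n * (α + β - γ - 1) - α * β + γ) * y - c * y ^ 2)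
      / ((c - 1) ^ 2 * (α * β - xm * x - y)) :=
  stmt_17_general α β γ n c hc0 hc1 A S xm x y h1 h2 hne
end

section
/- Let α, n ∈ ℂ and N ∈ ℂ with N ≠ 0, and let x, y be differentiable functions satisfying the semi-classical Laguerre differential system at a point c with c ∉ {0, −1}, x(c) ≠ 0 and y(c) ≠ 0. Define u₁ = x/y and v₁ = y (the blowup coordinates at the point (x,y) = (0,0)). Then u₁ and v₁ satisfy: u₁' = (−2c(c+1)N + (2c + N − c²N)·u₁ − (c+1)·n·u₁² − 2N(c+1)·u₁²·v₁)/(4c²) and v₁' = (c+1)·(2cα − 2cN·v₁ + n·u₁²·v₁ + N·u₁²·v₁²)/(4c²·u₁). -/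
/-!
Differentiating `u = x / y` gives `u' = (x' - u y') / y`. On `x = u v`, `y = v` the two terms
`α / (2c)` in `x' - u y'` cancel and everything that remains is divisible by `v`, so the lifted
equation for `u` has no pole along the exceptional line `v = 0`.
-/

namespace SemiclassicalLaguerre

section VectorField

variable {K : Type*} [Field K]

/-- The right-hand side of the semi-classical Laguerre equation for `x' / (c + 1)`. -/
def fieldX (α N c x y : K) : K :=
  -N * x ^ 2 / (4 * c ^ 2) - (N * (c - 1) / (4 * c ^ 2) - 1 / (2 * c * (c + 1))) * x
    - N * y / c + α / (2 * c)

/-- The right-hand side of the semi-classical Laguerre equation for `y' / (c + 1)`; it is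
meaningful only for `x ≠ 0`. -/
def fieldY (α n N c x y : K) : K :=
  -N * y ^ 2 / (2 * c * x) + (α / (2 * c * x) + N * x / (4 * c ^ 2)) * y + n * x / (4 * c ^ 2)

/-- The right-hand side of the equation for `u'` in the blowup coordinates `u = x / y`, `v = y`. -/
def liftedFieldU (n N c u v : K) : K :=
  (-(2 * c * (c + 1) * N) + (2 * c + N - c ^ 2 * N) * u - (c + 1) * n * u ^ 2
    - 2 * N * (c + 1) * u ^ 2 * v) / (4 * c ^ 2)

/-- The right-hand side of the equation for `v'` in the blowup coordinates `u = x / y`, `v = y`;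
it is meaningful only for `u ≠ 0`. -/
def liftedFieldV (α n N c u v : K) : K :=
  (c + 1) * (2 * c * α - 2 * c * N * v + n * u ^ 2 * v + N * u ^ 2 * v ^ 2) / (4 * c ^ 2 * u)

variable [NeZero (2 : K)] {c u v : K}

theorem four_ne_zero_of_two : (4 : K) ≠ 0 := by
  rw [← two_add_two_eq_four, ← two_mul]
  exact mul_ne_zero two_ne_zero two_ne_zero

theorem add_one_mul_fieldX_sub_mul_fieldY (α n N : K) (hc : c ≠ 0) (hc1 : c + 1 ≠ 0)
    (hu : u ≠ 0) (hv : v ≠ 0) :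
    (c + 1) * (fieldX α N c (u * v) v - u * fieldY α n N c (u * v) v)
      = liftedFieldU n N c u v * v := by
  have four_ne : (4 : K) ≠ 0 := four_ne_zero_of_two
  unfold fieldX fieldY liftedFieldU
  field_simp
  ring

theorem add_one_mul_fieldY (α n N : K) (hc : c ≠ 0) (hu : u ≠ 0) (hv : v ≠ 0) :
    (c + 1) * fieldY α n N c (u * v) v = liftedFieldV α n N c u v := by
  have four_ne : (4 : K) ≠ 0 := four_ne_zero_of_two
  unfold fieldY liftedFieldV
  field_simp
  ring

end VectorField

theorem hasDerivAt_div_blowup {𝕜 𝕜' : Type*} [NontriviallyNormedField 𝕜]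
    [NontriviallyNormedField 𝕜'] [NormedAlgebra 𝕜 𝕜'] {x y : 𝕜 → 𝕜'} {dx dy : 𝕜'} {c : 𝕜}
    (hx : HasDerivAt x dx c) (hy : HasDerivAt y dy c) (hyne : y c ≠ 0) :
    HasDerivAt (fun s => x s / y s) ((dx - x c / y c * dy) / y c) c :=
  (hx.fun_div hy hyne).congr_deriv (by field_simp)

end SemiclassicalLaguerre

open SemiclassicalLaguerre in
theorem stmt_18_general {𝕜 : Type*} [NontriviallyNormedField 𝕜] [NeZero (2 : 𝕜)]
    {α n N c : 𝕜} (hc0 : c ≠ 0) (hcm1 : c ≠ -1) {x y : 𝕜 → 𝕜} {dx dy : 𝕜}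
    (hx : HasDerivAt x dx c) (hy : HasDerivAt y dy c) (hxne : x c ≠ 0) (hyne : y c ≠ 0)
    (hsys1 : dx / (c + 1) = fieldX α N c (x c) (y c))
    (hsys2 : dy / (c + 1) = fieldY α n N c (x c) (y c)) :
    HasDerivAt (fun s => x s / y s) (liftedFieldU n N c (x c / y c) (y c)) c ∧
      HasDerivAt y (liftedFieldV α n N c (x c / y c) (y c)) c := by
  have hc1 : c + 1 ≠ 0 := fun h => hcm1 (eq_neg_of_add_eq_zero_left h)
  have hune : x c / y c ≠ 0 := div_ne_zero hxne hyne
  have x_eq : x c / y c * y c = x c := div_mul_cancel₀ (x c) hyne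
  have dx_eq : dx = (c + 1) * fieldX α N c (x c) (y c) := by
    rw [← hsys1, mul_div_cancel₀ dx hc1]
  have dy_eq : dy = (c + 1) * fieldY α n N c (x c) (y c) := by
    rw [← hsys2, mul_div_cancel₀ dy hc1]
  have lift_u := add_one_mul_fieldX_sub_mul_fieldY α n N hc0 hc1 hune hyne
  have lift_v := add_one_mul_fieldY α n N hc0 hune hyne
  rw [x_eq] at lift_u lift_v
  refine ⟨(hasDerivAt_div_blowup hx hy hyne).congr_deriv ?_, hy.congr_deriv (dy_eq.trans lift_v)⟩
  rw [div_eq_iff hyne, ← lift_u, dx_eq, dy_eq]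
  ring

/-- In the blowup coordinates `u₁ = x/y`, `v₁ = y` at the point `(x,y) = (0,0)`,
the semi-classical Laguerre differential system takes the lifted form (4.6). -/
theorem stmt_18 (α n N : ℂ) (hN : N ≠ 0) (c : ℂ)
    (hc0 : c ≠ 0) (hcm1 : c ≠ -1)
    (x y : ℂ → ℂ) (dx dy : ℂ)
    (hx : HasDerivAt x dx c) (hy : HasDerivAt y dy c)
    (hxne : x c ≠ 0) (hyne : y c ≠ 0)
    (hsys1 : dx / (c + 1) = -N * (x c) ^ 2 / (4 * c ^ 2)
        - (N * (c - 1) / (4 * c ^ 2) - 1 / (2 * c * (c + 1))) * x c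
        - N * y c / c + α / (2 * c))
    (hsys2 : dy / (c + 1) = -N * (y c) ^ 2 / (2 * c * x c)
        + (α / (2 * c * x c) + N * x c / (4 * c ^ 2)) * y c
        + n * x c / (4 * c ^ 2)) :
    HasDerivAt (fun s => x s / y s)
      ((-(2 * c * (c + 1) * N) + (2 * c + N - c ^ 2 * N) * (x c / y c)
          - (c + 1) * n * (x c / y c) ^ 2
          - 2 * N * (c + 1) * (x c / y c) ^ 2 * y c)
        / (4 * c ^ 2)) c ∧
    HasDerivAt y
      ((c + 1) * (2 * c * α - 2 * c * N * y c + n * (x c / y c) ^ 2 * y c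
          + N * (x c / y c) ^ 2 * (y c) ^ 2)
        / (4 * c ^ 2 * (x c / y c))) c := by
  exact stmt_18_general hc0 hcm1 hx hy hxne hyne hsys1 hsys2
end

section
/- Let N ∈ ℂ with N ≠ 0, and let c, t ∈ ℂ with c ∉ {0, 1} and 2ct² = (c−1)²·N. Define, for (x, y) ∈ ℂ² with x ≠ 0, q(x,y) = t·x/(c−1) and p(x,y) = −2ct·y/((c−1)·x). Then the map (x, y) ↦ (q, p) is symplectic from the form N·dx∧dy/x to dp∧dq: its partial derivatives satisfy (∂p/∂x)·(∂q/∂y) − (∂p/∂y)·(∂q/∂x) = N/x at every point with x ≠ 0. -/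
/-!
Since `q` depends on `x` alone, the Jacobian matrix is triangular and only the product
`-(∂p/∂y) · (∂q/∂x)` contributes to `dp ∧ dq`. As `p` is linear in `y` with slope proportional to
`1/x`, this product is a constant over `x`, and the relation between `c`, `t` and `N` says that the
constant is `N`.
-/

section Jacobian

variable {𝕜 : Type*} [NontriviallyNormedField 𝕜]

/-- The coefficient of `dx ∧ dy` in `dp ∧ dq` at the point `(x, y)`, where `p` and `q` are functions
of two variables in curried form. The partial derivatives are taken with `deriv`, so a partial
derivative that does not exist counts as `0`. -/
noncomputable def jacobianDet (p q : 𝕜 → 𝕜 → 𝕜) (x y : 𝕜) : 𝕜 :=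
  deriv (fun w => p w y) x * deriv (fun w => q x w) y
    - deriv (fun w => p x w) y * deriv (fun w => q w y) x

theorem jacobianDet_const_snd (p : 𝕜 → 𝕜 → 𝕜) (f : 𝕜 → 𝕜) (x y : 𝕜) :
    jacobianDet p (fun w _ => f w) x y = -(deriv (p x) y * deriv f x) := by
  simp only [jacobianDet, deriv_const, mul_zero, zero_sub]

theorem jacobianDet_mul_snd_const_snd (g f : 𝕜 → 𝕜) (x y : 𝕜) :
    jacobianDet (fun w z => g w * z) (fun w _ => f w) x y = -(g x * deriv f x) := by
  rw [jacobianDet_const_snd, deriv_const_mul_id]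

theorem stmt_19_general (N c t : 𝕜) (hc1 : c ≠ 1) (hrel : 2 * c * t ^ 2 = (c - 1) ^ 2 * N)
    (q p : 𝕜 → 𝕜 → 𝕜)
    (hq : ∀ x y : 𝕜, q x y = t * x / (c - 1))
    (hp : ∀ x y : 𝕜, p x y = -(2 * c * t * y) / ((c - 1) * x))
    (x y : 𝕜) (hx : x ≠ 0) :
    jacobianDet p q x y = N / x := by
  have hc : c - 1 ≠ 0 := sub_ne_zero.mpr hc1
  have q_eq : q = fun w _ => t / (c - 1) * w := by
    ext w z
    rw [hq, mul_div_right_comm]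
  have p_eq : p = fun w z => -(2 * c * t) / ((c - 1) * w) * z := by
    ext w z
    rw [hp, ← neg_mul, mul_div_right_comm]
  calc jacobianDet p q x y
      = -(-(2 * c * t) / ((c - 1) * x) * (t / (c - 1))) := by
        rw [p_eq, q_eq, jacobianDet_mul_snd_const_snd, deriv_const_mul_id]
    _ = 2 * c * t ^ 2 / ((c - 1) ^ 2 * x) := by field_simp
    _ = N / x := by rw [hrel, mul_div_mul_left _ _ (pow_ne_zero 2 hc)]

end Jacobian

/-- The change of variables `q = t·x/(c−1)`, `p = −2cty/((c−1)x)` (with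
`2ct² = (c−1)²N`) is symplectic from the 2-form `N·dx∧dy/x` to `dp∧dq`:
`(∂p/∂x)·(∂q/∂y) − (∂p/∂y)·(∂q/∂x) = N/x` at every point with `x ≠ 0`. -/
theorem stmt_19 (N c t : ℂ) (hN : N ≠ 0) (hc0 : c ≠ 0) (hc1 : c ≠ 1)
    (hrel : 2 * c * t ^ 2 = (c - 1) ^ 2 * N)
    (q p : ℂ → ℂ → ℂ)
    (hq : ∀ u v : ℂ, q u v = t * u / (c - 1))
    (hp : ∀ u v : ℂ, p u v = -(2 * c * t * v) / ((c - 1) * u)) :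
    ∀ u v : ℂ, u ≠ 0 →
      deriv (fun w => p w v) u * deriv (fun w => q u w) v
        - deriv (fun w => p u w) v * deriv (fun w => q w v) u = N / u :=
  stmt_19_general N c t hc1 hrel q p hq hp
end
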